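/- arXiv:1510.03052 — 2 statements merged into one kernel-verified Lean document; each statement's English description precedes it below -/
import Mathlib

section
/- Every uniquely pancyclic (UPC) graph on v vertices with at most v + 3 edges satisfies v ∈ {3, 5, 8, 14}. -/
open SimpleGraph

/-- The number of cycles of length `k` in `G`, counted as subgraphs of `G`
isomorphic to the cycle graph `C_k`. -/
noncomputable def cycleCount {V : Type*} (G : SimpleGraph V) (k : ℕ) : ℕ :=
  {H : G.Subgraph | Nonempty (H.coe ≃g cycleGraph k)}.ncard

/-- A graph on `v ≥ 3` vertices is `(r)`-pancyclic if it contains precisely `r`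
cycles of every length from `3` to `v`. -/
def IsRPancyclic {V : Type*} [Fintype V] (G : SimpleGraph V) (r : ℕ) : Prop :=
  3 ≤ Fintype.card V ∧
    ∀ k : ℕ, 3 ≤ k → k ≤ Fintype.card V → cycleCount G k = r

namespace UPC

section Graph

variable {V : Type*}

/-- `g` runs periodically around a cycle with `k` vertices. -/
def Cyc (g : ℕ → V) (k : ℕ) : Prop := 3 ≤ k ∧ ∀ a b, g a = g b ↔ a ≡ b [MOD k]

/-- Degree of `v` in the edge set `E`, modulo 2. -/
noncomputable def deg2 (v : V) (E : Finset (Sym2 V)) : ZMod 2 :=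
  open Classical in ∑ e ∈ E, if v ∈ e then 1 else 0

def IsEv (E : Finset (Sym2 V)) : Prop := ∀ v, deg2 v E = 0

def Circuit (E : Finset (Sym2 V)) : Prop :=
  E.Nonempty ∧ IsEv E ∧ ∀ F ⊆ E, F.Nonempty → IsEv F → F = E

/-- edges of a labelled cycle -/
noncomputable def cycE (g : ℕ → V) (k : ℕ) : Finset (Sym2 V) :=
  open Classical in (Finset.range k).image fun i => s(g i, g (i + 1))

theorem Cyc.succ {g : ℕ → V} {k : ℕ} (h : Cyc g k) {a b : ℕ} :
    g (a + 1) = g (b + 1) ↔ g a = g b := by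
  rw [h.2, h.2]
  exact ⟨fun h => Nat.ModEq.add_right_cancel' 1 h, fun h => h.add_right 1⟩

theorem Cyc.ne_add {g : ℕ → V} {k : ℕ} (h : Cyc g k) {a d : ℕ} (h0 : 0 < d) (h1 : d < k) :
    g a ≠ g (a + d) := by
  intro e
  rw [h.2] at e
  have := (Nat.modEq_iff_dvd' (by omega)).1 e
  simp only [Nat.add_sub_cancel_left] at this
  exact absurd (Nat.le_of_dvd h0 this) (by omega)

theorem Cyc.inj {g : ℕ → V} {k : ℕ} (h : Cyc g k) {a b : ℕ} (ha : a < k) (hb : b < k)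
    (e : g a = g b) : a = b := Nat.ModEq.eq_of_lt_of_lt ((h.2 a b).1 e) ha hb

theorem Cyc.per {g : ℕ → V} {k : ℕ} (h : Cyc g k) (a : ℕ) : g (a + k) = g a := by
  rw [h.2]; simp [Nat.ModEq]

theorem Cyc.mod {g : ℕ → V} {k : ℕ} (h : Cyc g k) (a : ℕ) : g (a % k) = g a := by
  rw [h.2]; simp [Nat.ModEq]

theorem Cyc.edge_inj {g : ℕ → V} {k : ℕ} (h : Cyc g k) {a b : ℕ}
    (e : s(g a, g (a + 1)) = s(g b, g (b + 1))) : g a = g b := by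
  rw [Sym2.eq_iff] at e
  rcases e with e | ⟨e1, e2⟩
  · exact e.1
  · exfalso
    have h2 : g (a + 1 + 1) = g (b + 1) := h.succ.2 e2
    rw [← e1] at h2
    have h3 := h.1
    exact h.ne_add (a := a) (d := 2) (by omega) (by omega) h2.symm

theorem mem_cycE {g : ℕ → V} {k : ℕ} (h : Cyc g k) {e : Sym2 V} :
    e ∈ cycE g k ↔ ∃ i, e = s(g i, g (i + 1)) := by
  simp only [cycE, Finset.mem_image, Finset.mem_range]
  have hk := h.1
  constructor
  · rintro ⟨i, _, rfl⟩; exact ⟨i, rfl⟩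
  · rintro ⟨i, rfl⟩
    refine ⟨i % k, Nat.mod_lt _ (by omega), ?_⟩
    rw [h.mod, h.succ.2 (h.mod i)]

theorem card_cycE {g : ℕ → V} {k : ℕ} (h : Cyc g k) : (cycE g k).card = k := by
  classical
  unfold cycE
  rw [Finset.card_image_of_injOn, Finset.card_range]
  intro a ha b hb e
  simp only [Finset.coe_range, Set.mem_Iio] at ha hb
  exact h.inj ha hb (h.edge_inj e)

open Classical in
theorem edge_ind {a b : V} (hab : a ≠ b) (v : V) :
    (if v ∈ s(a, b) then 1 else 0 : ZMod 2) = (if v = a then 1 else 0) + (if v = b then 1 else 0) := by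
  simp only [Sym2.mem_iff]
  by_cases h1 : v = a <;> by_cases h2 : v = b <;> simp_all

open Classical in
theorem telescope {g : ℕ → V} {k : ℕ} (h : Cyc g k) (v : V) (p q : ℕ) (hpq : p ≤ q) :
    ∑ i ∈ Finset.Ico p q, (if v ∈ s(g i, g (i + 1)) then 1 else 0 : ZMod 2)
      = (if v = g p then 1 else 0) + (if v = g q then 1 else 0) := by
  have hk := h.1
  induction q, hpq using Nat.le_induction with
  | base => simp [CharTwo.add_self_eq_zero]
  | succ q hq ih =>
    rw [Finset.sum_Ico_succ_top hq, ih, edge_ind (h.ne_add (by omega) (by omega))]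
    have : ∀ x y z : ZMod 2, x + y + (y + z) = x + z := by decide
    exact this _ _ _

theorem even_cycE {g : ℕ → V} {k : ℕ} (h : Cyc g k) : IsEv (cycE g k) := by
  classical
  intro v
  unfold deg2 cycE
  rw [Finset.sum_image]
  · rw [Finset.range_eq_Ico, telescope h v 0 k (by omega)]
    have := h.per 0
    rw [zero_add] at this
    rw [this, CharTwo.add_self_eq_zero]
  · intro a ha b hb e
    simp only [Finset.coe_range, Set.mem_Iio] at ha hb
    exact h.inj ha hb (h.edge_inj e)

theorem circuit_cycE {g : ℕ → V} {k : ℕ} (h : Cyc g k) : Circuit (cycE g k) := by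
  classical
  have hk := h.1
  refine ⟨⟨_, (mem_cycE h).2 ⟨0, rfl⟩⟩, even_cycE h, fun F hF hne hev => ?_⟩
  have step : ∀ i, s(g i, g (i + 1)) ∈ F → s(g (i + 1), g (i + 1 + 1)) ∈ F := by
    intro i hi
    by_contra hcon
    have h1 := hev (g (i + 1))
    unfold deg2 at h1
    rw [Finset.sum_eq_single_of_mem _ hi] at h1
    · simp at h1
    · intro e he hne'
      rw [if_neg]
      intro hm
      obtain ⟨j, rfl⟩ := (mem_cycE h).1 (hF he)
      rcases Sym2.mem_iff.1 hm with h2 | h2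
      · rw [h2, h.succ.2 h2] at hcon
        exact hcon he
      · have h3 := h.succ.1 h2
        rw [h3, h2] at hne'
        exact hne' rfl
  obtain ⟨e, he⟩ := hne
  obtain ⟨i, rfl⟩ := (mem_cycE h).1 (hF he)
  have all : ∀ j, s(g (i + j), g (i + j + 1)) ∈ F := by
    intro j
    induction j with
    | zero => exact he
    | succ j ih => exact step _ ih
  refine Finset.Subset.antisymm hF fun e he' => ?_
  obtain ⟨t, rfl⟩ := (mem_cycE h).1 he'
  have h4 : g (i + (i * (k - 1) + t)) = g t := by
    rw [h.2]
    have : i + (i * (k - 1) + t) = t + i * k := by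
      obtain ⟨m, rfl⟩ : ∃ m, k = m + 1 := ⟨k - 1, by omega⟩
      simp only [Nat.add_sub_cancel]; ring
    rw [this]
    simp [Nat.ModEq]
  have := all (i * (k - 1) + t)
  rwa [h4, h.succ.2 h4] at this

theorem cycleGraph_adj_iff {k : ℕ} (hk : 3 ≤ k) (i j : Fin k) :
    (cycleGraph k).Adj i j ↔ (i : ℕ) + 1 ≡ j [MOD k] ∨ (j : ℕ) + 1 ≡ i [MOD k] := by
  rw [cycleGraph_adj', Fin.sub_def, Fin.sub_def]
  have hi := i.2
  have hj := j.2
  simp only [Nat.ModEq]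
  have key : ∀ a b : ℕ, a < k → b < k → ((k - b + a) % k = 1 ↔ (b + 1) % k = a % k) := by
    intro a b ha hb
    rw [Nat.mod_eq_of_lt ha]
    by_cases h1 : b + 1 = k
    · rw [h1, Nat.mod_self]
      rcases Nat.lt_or_ge (k - b + a) k with h2 | h2
      · rw [Nat.mod_eq_of_lt h2]; omega
      · rw [Nat.mod_eq_sub_mod h2, Nat.mod_eq_of_lt (by omega)]; omega
    · rw [Nat.mod_eq_of_lt (by omega : b + 1 < k)]
      rcases Nat.lt_or_ge (k - b + a) k with h2 | h2
      · rw [Nat.mod_eq_of_lt h2]; omega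
      · rw [Nat.mod_eq_sub_mod h2, Nat.mod_eq_of_lt (by omega)]; omega
  rw [key _ _ hi hj, key _ _ hj hi]
  exact or_comm

theorem edge_mem_iff {g : ℕ → V} {k : ℕ} (h : Cyc g k) (i j : Fin k) :
    s(g i, g j) ∈ cycE g k ↔ (cycleGraph k).Adj i j := by
  rw [mem_cycE h, cycleGraph_adj_iff h.1, ← h.2, ← h.2]
  constructor
  · rintro ⟨t, ht⟩
    rcases Sym2.eq_iff.1 ht with ⟨h1, h2⟩ | ⟨h1, h2⟩
    · left; rw [h2]; exact h.succ.2 h1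
    · right; rw [h1]; exact h.succ.2 h2
  · rintro (h1 | h1)
    · exact ⟨i, by rw [h1]⟩
    · exact ⟨j, by rw [h1, Sym2.eq_swap]⟩

/-- labelled cycle from an injective map -/
theorem cyc_of_inj {k : ℕ} (hk : 3 ≤ k) (φ : Fin k → V) (hφ : Function.Injective φ) :
    Cyc (fun i => φ ⟨i % k, Nat.mod_lt _ (by omega)⟩) k := by
  refine ⟨hk, fun a b => ?_⟩
  rw [hφ.eq_iff, Fin.mk.injEq]
  rfl

theorem copy_edges {k : ℕ} (hk : 3 ≤ k) (φ : Fin k → V) (G : SimpleGraph V)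
    (hadj : ∀ i j, (cycleGraph k).Adj i j → G.Adj (φ i) (φ j)) (i : ℕ) :
    G.Adj (φ ⟨i % k, Nat.mod_lt _ (by omega)⟩) (φ ⟨(i + 1) % k, Nat.mod_lt _ (by omega)⟩) := by
  apply hadj
  rw [cycleGraph_adj_iff hk]
  left
  simp [Nat.ModEq]

/-- The subgraph of a labelled cycle. -/
def cycSub (G : SimpleGraph V) (g : ℕ → V) (k : ℕ) (h : Cyc g k)
    (hG : ∀ e ∈ cycE g k, e ∈ G.edgeSet) : G.Subgraph where
  verts := Set.range g
  Adj u v := s(u, v) ∈ cycE g k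
  adj_sub := fun h => hG _ h
  edge_vert := by
    intro v w hvw
    obtain ⟨i, hi⟩ := (mem_cycE h).1 hvw
    rcases Sym2.eq_iff.1 hi with ⟨h1, h2⟩ | ⟨h1, h2⟩
    · exact ⟨_, h1.symm⟩
    · exact ⟨_, h1.symm⟩
  symm := ⟨fun u v huv => by rwa [Sym2.eq_swap]⟩

theorem cycSub_iso (G : SimpleGraph V) (g : ℕ → V) (k : ℕ) (h : Cyc g k)
    (hG : ∀ e ∈ cycE g k, e ∈ G.edgeSet) :
    Nonempty ((cycSub G g k h hG).coe ≃g cycleGraph k) := by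
  have hk := h.1
  have hb : Function.Bijective (fun i : Fin k =>
      (⟨g i, ⟨i, rfl⟩⟩ : (cycSub G g k h hG).verts)) := by
    constructor
    · intro a b hab
      exact Fin.ext (h.inj a.2 b.2 (congrArg Subtype.val hab))
    · rintro ⟨_, ⟨i, rfl⟩⟩
      exact ⟨⟨i % k, Nat.mod_lt _ (by omega)⟩, Subtype.ext (h.mod i)⟩
  refine ⟨SimpleGraph.Iso.symm ⟨Equiv.ofBijective _ hb, ?_⟩⟩
  intro a b
  exact edge_mem_iff h a b

theorem exists_cyc_of_sub {G : SimpleGraph V} {k : ℕ} (hk : 3 ≤ k) (H : G.Subgraph)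
    (hH : Nonempty (H.coe ≃g cycleGraph k)) :
    ∃ g : ℕ → V, Cyc g k ∧ ∀ e ∈ cycE g k, e ∈ G.edgeSet := by
  obtain ⟨ψ⟩ := hH
  have hc := cyc_of_inj hk (fun i => (ψ.symm i : V))
    (fun a b hab => ψ.symm.injective (Subtype.ext hab))
  refine ⟨_, hc, fun e he => ?_⟩
  obtain ⟨i, rfl⟩ := (mem_cycE hc).1 he
  exact copy_edges hk (fun i => (ψ.symm i : V)) G
    (fun i j hij => H.adj_sub ((ψ.symm.map_rel_iff).2 hij)) i

theorem exists_cyc_of_even [Finite V] (E : Finset (Sym2 V)) (hnd : ∀ e ∈ E, ¬ e.IsDiag)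
    (hne : E.Nonempty) (hev : IsEv E) : ∃ k g, Cyc g k ∧ cycE g k ⊆ E := by
  classical
  have hadj : ∀ a b, (fromEdgeSet (E : Set (Sym2 V))).Adj a b ↔ s(a, b) ∈ E := by
    intro a b
    rw [fromEdgeSet_adj]
    simp only [Finset.mem_coe, and_iff_left_iff_imp]
    intro h hab
    exact hnd _ h (by simpa using hab)
  have hna : ¬ (fromEdgeSet (E : Set (Sym2 V))).IsAcyclic := by
    intro hac
    obtain ⟨e, he⟩ := hne
    induction e using Sym2.ind with | _ a b =>
    have : Nonempty V := ⟨a⟩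
    obtain ⟨u, v, p, hp, hmax⟩ :=
      Walk.exists_isPath_forall_isPath_length_le_length (fromEdgeSet (E : Set (Sym2 V)))
    have hab := (hadj a b).2 he
    have hlen : 1 ≤ p.length := by
      have := hmax _ _ (Walk.cons hab Walk.nil) (by simp [hab.ne])
      simpa using this
    have hnn : ¬ p.Nil := by
      intro h; rw [← Walk.length_eq_zero_iff] at h; omega
    have hpen : s(v, p.penultimate) ∈ E := (hadj _ _).1 (p.adj_penultimate hnn).symm
    have h1 := hev v
    unfold deg2 at h1
    rw [Finset.sum_eq_single_of_mem _ hpen] at h1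
    · simp at h1
    · intro e he hne'
      rw [if_neg]
      intro hm
      obtain ⟨w, rfl⟩ := hm
      have hvw := (hadj v w).2 he
      by_cases hw : w ∈ p.support
      · exact hne' (by rw [hac.eq_penultimate_of_adj_end hp hvw hw])
      · have := hmax _ _ _ (hp.concat hw hvw)
        simp at this
  rw [isAcyclic_iff_free_cycleGraph] at hna
  push Not at hna
  obtain ⟨k, hk, hcon⟩ := hna
  obtain ⟨φ⟩ := hcon
  have hc := cyc_of_inj hk (fun i => φ i) φ.injective
  refine ⟨k, _, hc, fun e he => ?_⟩
  obtain ⟨i, rfl⟩ := (mem_cycE hc).1 he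
  exact (hadj _ _).1 (copy_edges hk (fun i => φ i) _ (fun i j hij => φ.toHom.map_rel hij) i)

theorem exists_cyc_of_circuit [Finite V] (E : Finset (Sym2 V)) (hnd : ∀ e ∈ E, ¬ e.IsDiag)
    (h : Circuit E) : ∃ k g, Cyc g k ∧ cycE g k = E := by
  obtain ⟨k, g, hc, hs⟩ := exists_cyc_of_even E hnd h.1 h.2.1
  exact ⟨k, g, hc, h.2.2 _ hs (circuit_cycE hc).1 (even_cycE hc)⟩

theorem Cyc.le_card [Fintype V] {g : ℕ → V} {k : ℕ} (h : Cyc g k) : k ≤ Fintype.card V := by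
  have := Fintype.card_le_of_injective (fun i : Fin k => g i)
    (fun a b hab => Fin.ext (h.inj a.2 b.2 hab))
  simpa using this

/-- The circuit form of unique pancyclicity for a set of edges `A`. -/
structure Upc (n : ℕ) (A : Finset (Sym2 V)) : Prop where
  ex : ∀ k, 3 ≤ k → k ≤ n → ∃ E ⊆ A, Circuit E ∧ E.card = k
  uniq : ∀ E ⊆ A, ∀ F ⊆ A, Circuit E → Circuit F → E.card = F.card → E = F
  bd : ∀ E ⊆ A, Circuit E → 3 ≤ E.card ∧ E.card ≤ n

theorem upc_of_pancyclic [Fintype V] (G : SimpleGraph V) (hG : IsRPancyclic G 1)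
    (A : Finset (Sym2 V)) (hA : (A : Set (Sym2 V)) = G.edgeSet) : Upc (Fintype.card V) A := by
  have hmem : ∀ e, e ∈ A ↔ e ∈ G.edgeSet := by intro e; rw [← hA]; rfl
  have hnd : ∀ E ⊆ A, ∀ e ∈ E, ¬ e.IsDiag := fun E hE e he =>
    G.not_isDiag_of_mem_edgeSet ((hmem e).1 (hE he))
  refine ⟨fun k h3 hk => ?_, fun E hE F hF cE cF hEF => ?_, fun E hE cE => ?_⟩
  · obtain ⟨H, hH⟩ := Set.ncard_eq_one.1 (hG.2 k h3 hk)
    have : H ∈ {H : G.Subgraph | Nonempty (H.coe ≃g cycleGraph k)} := by rw [hH]; rfl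
    obtain ⟨g, hc, hs⟩ := exists_cyc_of_sub h3 H this
    exact ⟨cycE g k, fun e he => (hmem e).2 (hs e he), circuit_cycE hc, card_cycE hc⟩
  · obtain ⟨k, g, hc, rfl⟩ := exists_cyc_of_circuit E (hnd E hE) cE
    obtain ⟨k', g', hc', rfl⟩ := exists_cyc_of_circuit F (hnd F hF) cF
    rw [card_cycE hc, card_cycE hc'] at hEF
    subst hEF
    obtain ⟨H, hH⟩ := Set.ncard_eq_one.1 (hG.2 k hc.1 hc.le_card)
    have m1 := cycSub_iso G g k hc (fun e he => (hmem e).1 (hE he))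
    have m2 := cycSub_iso G g' k hc' (fun e he => (hmem e).1 (hF he))
    have e1 : cycSub G g k hc (fun e he => (hmem e).1 (hE he)) ∈
      {H : G.Subgraph | Nonempty (H.coe ≃g cycleGraph k)} := m1
    have e2 : cycSub G g' k hc' (fun e he => (hmem e).1 (hF he)) ∈
      {H : G.Subgraph | Nonempty (H.coe ≃g cycleGraph k)} := m2
    rw [hH, Set.mem_singleton_iff] at e1 e2
    have e3 := e1.trans e2.symm
    ext e
    induction e using Sym2.ind with | _ a b =>
    have := congrArg (fun H => H.Adj a b) e3
    exact iff_of_eq this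
  · obtain ⟨k, g, hc, rfl⟩ := exists_cyc_of_circuit E (hnd E hE) cE
    rw [card_cycE hc]
    exact ⟨hc.1, hc.le_card⟩

end Graph

section Comp


noncomputable def force {α : Type} (z : ℕ) (k : ℕ → α) : α :=
  Nat.rec (k 0) (fun m _ => k (Nat.succ m)) z

noncomputable def forceList {α : Type} (l : List ℕ) : (List ℕ → α) → α :=
  List.rec (fun k => k []) (fun a _ ih k => force a fun a' => ih fun l' => k (a' :: l')) l

noncomputable def allB {α : Type} (l : List α) (f : α → Bool) : Bool :=
  List.rec true (fun a _ ih => Bool.rec false ih (f a)) l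

noncomputable def popTable : ℕ := 691891631198144392856559290268183413079358697706568855457126045549567151088131691256626159056844317618317923606893351643854468403619043166814076576414268406326350923042017063301076029212981813820886919023201834597812901077391424196553977413717454895703075866534550517438105614166057806665998121116531295109689203875226550385671292864339073848932627294921111414458750574984356947255711960357219955671903730422407417440176864161555058810512547260001497845276262617956733113709245299355299752976167191424794909384033701045106410182777541842746488003463172238779362120797824316313995566458595695663231716811629701661978332670584337785522496192446517623708042648828658246934940923359184773613698346691450602677467744274600681034513233152844416435211660154309936063013525879158435914870983724555214555273057434592165555363815217522168032015953599143577327254351958092045457434946665763835491478172321915335078720581711880441120768020105460112867763827221107738879880274733212236587000790378039248184331915894421225801759436105632157507993068486763007017993245207393048855564932976062782041797226457386880135454852809196006524511772020756940829358804825465443494801516909017007020981467251299052172145039322024649071247711858340863347335440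

noncomputable def lk (i : ℕ) : ℕ := Nat.mod (Nat.shiftRight popTable (Nat.mul 4 i)) 16

noncomputable def popc (z : ℕ) : ℕ := Nat.add (lk (Nat.mod z 1024)) (lk (Nat.div z 1024))

noncomputable def gen (p q b : ℕ) : ℕ :=
  Nat.xor (Nat.xor (Nat.sub (Nat.pow 2 p) 1) (Nat.sub (Nat.pow 2 q) 1)) (Nat.pow 2 b)

noncomputable def xmap (g : ℕ) (S : List ℕ) (l : List ℕ) : List ℕ :=
  List.rec l (fun a _ ih => (Nat.xor a g) :: ih) S

noncomputable def minB (S : List ℕ) (z : ℕ) : Bool :=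
  List.rec true (fun w _ ih =>
    Bool.rec ih (Bool.rec (Bool.rec false ih (Nat.beq w 0)) ih (Nat.beq w z)) (Nat.beq (Nat.land w z) w)) S

noncomputable def isCirc (S : List ℕ) (z : ℕ) : Bool :=
  Bool.rec (minB S z) false (Nat.beq z 0)
/-- goes through R, collecting the lengths; `d` on duplicate, `k mask` at end -/

noncomputable def scan {α : Type} (S R : List ℕ) (d : α) (k : ℕ → α) : α :=
  List.rec (motive := fun _ => ℕ → α) k
    (fun z _ ih acc => Bool.rec (ih acc)
      (force (Nat.pow 2 (popc z)) fun b =>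
        Bool.rec d (force (Nat.lor acc b) ih) (Nat.beq (Nat.land acc b) 0)) (isCirc S z)) R 0

noncomputable def span1 {α : Type} (g : ℕ) (S : List ℕ) (k : List ℕ → α) : α :=
  force g fun g => forceList (xmap g S S) k

noncomputable def chords (n l : ℕ) : List (ℕ × ℕ) :=
  (List.range n).flatMap fun p => ((List.range n).filter fun q =>
    Nat.ble (Nat.add p l) q && Nat.ble (Nat.add q l) (Nat.add n p)).map fun q => (p, q)

noncomputable def surv (n : ℕ) (Sx : List ℕ) (C : List (ℕ × ℕ)) : (List ℕ → Bool) → Bool :=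
  List.rec (fun k => k []) (fun y _ ih k =>
    span1 (gen y.1 y.2 (Nat.add n 1)) Sx fun S =>
     scan S S (ih k) fun m =>
      force (Nat.add (Nat.mul m 1024) (Nat.add (Nat.mul y.1 32) y.2)) fun c => ih fun S => k (c :: S)) C

noncomputable def pairs (n full : ℕ) (Sx : List ℕ) (mx : ℕ) (S : List ℕ) : Bool :=
  allB S fun c => force (Nat.mod c 1024) fun cc => 
    span1 (gen (Nat.div cc 32) (Nat.mod cc 32) (Nat.add n 1)) Sx fun Sy =>
    allB S fun d => force (Nat.mod d 1024) fun dd =>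
    Bool.rec 
    (force (Nat.land (Nat.div c 1024) (Nat.div d 1024)) fun e =>
      Bool.rec true (span1 (gen (Nat.div dd 32) (Nat.mod dd 32) (Nat.add n 2)) Sy fun S =>
        scan S S true fun m => Bool.rec true false (Nat.beq m full)) (Nat.beq (Nat.land e mx) e))
    true (Nat.ble cc dd)

noncomputable def chk3 (n l : ℕ) : Bool :=
  span1 (gen 0 l n) [0, Nat.sub (Nat.pow 2 n) 1] fun Sx => scan Sx Sx true fun mx =>
    force (Nat.sub (Nat.pow 2 (Nat.add n 1)) 8) fun full =>
    surv n Sx (chords n l) (pairs n full Sx mx)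

noncomputable def chk2 (n l : ℕ) : Bool :=
  span1 (gen 0 l n) [0, Nat.sub (Nat.pow 2 n) 1] fun Sx =>
    force (Nat.sub (Nat.pow 2 (Nat.add n 1)) 8) fun full =>
    allB (chords n l) fun y => span1 (gen y.1 y.2 (Nat.add n 1)) Sx fun S =>
      scan S S true fun m => Bool.rec true false (Nat.beq m full)

noncomputable def chk1 (n l : ℕ) : Bool :=
  span1 (gen 0 l n) [0, Nat.sub (Nat.pow 2 n) 1] fun S =>
    scan S S true fun m => Bool.rec true false (Nat.beq m (Nat.sub (Nat.pow 2 (Nat.add n 1)) 8))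

end Comp

section Spec

theorem force_eq {α : Type} (z : ℕ) (k : ℕ → α) : force z k = k z := by
  cases z <;> rfl

theorem forceList_eq {α : Type} (l : List ℕ) : ∀ k : List ℕ → α, forceList l k = k l := by
  induction l with
  | nil => intro k; rfl
  | cons a l ih =>
    intro k
    change (force a fun a' => forceList l fun l' => k (a' :: l')) = _
    rw [force_eq, ih]

theorem xmap_eq (g : ℕ) (S l : List ℕ) : xmap g S l = S.map (fun a => a ^^^ g) ++ l := by
  induction S with
  | nil => rfl
  | cons a S ih =>
    change (Nat.xor a g) :: xmap g S l = _
    rw [ih]; rfl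

theorem span1_eq {α : Type} (g : ℕ) (S : List ℕ) (k : List ℕ → α) :
    span1 g S k = k (xmap g S S) := by
  unfold span1
  rw [force_eq, forceList_eq]

theorem allB_mem {α : Type} {l : List α} {f : α → Bool} (h : allB l f = true) :
    ∀ a ∈ l, f a = true := by
  induction l with
  | nil => simp
  | cons a l ih =>
    change (Bool.rec false (allB l f) (f a) : Bool) = true at h
    cases hf : f a with
    | false => rw [hf] at h; simp at h
    | true =>
      rw [hf] at h
      intro b hb
      rcases List.mem_cons.1 hb with rfl | hb
      · exact hf
      · exact ih h b hb

theorem minB_iff (S : List ℕ) (z : ℕ) :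
    minB S z = true ↔ ∀ w ∈ S, w &&& z = w → w = 0 ∨ w = z := by
  induction S with
  | nil => simp [minB]
  | cons w S ih =>
    change (Bool.rec (minB S z) (Bool.rec (Bool.rec false (minB S z) (Nat.beq w 0)) (minB S z)
      (Nat.beq w z)) (Nat.beq (w &&& z) w) : Bool) = true ↔ _
    rw [List.forall_mem_cons, ← ih]
    cases h1 : Nat.beq (w &&& z) w with
    | false =>
      have : ¬ (w &&& z = w) := Nat.ne_of_beq_eq_false h1
      simp [this]
    | true =>
      have e1 : w &&& z = w := Nat.eq_of_beq_eq_true h1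
      cases h2 : Nat.beq w z with
      | true =>
        have e2 : w = z := Nat.eq_of_beq_eq_true h2
        simp [e2]
      | false =>
        have e2 : ¬ (w = z) := Nat.ne_of_beq_eq_false h2
        cases h3 : Nat.beq w 0 with
        | true =>
          have e3 : w = 0 := Nat.eq_of_beq_eq_true h3
          simp [e3]
        | false =>
          have e3 : ¬ (w = 0) := Nat.ne_of_beq_eq_false h3
          simp [e1, e2, e3]

theorem isCirc_iff (S : List ℕ) (z : ℕ) :
    isCirc S z = true ↔ z ≠ 0 ∧ ∀ w ∈ S, w &&& z = w → w = 0 ∨ w = z := by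
  unfold isCirc
  rw [← minB_iff]
  cases h : Nat.beq z 0 with
  | true => have := Nat.eq_of_beq_eq_true h; simp [this]
  | false => have := Nat.ne_of_beq_eq_false h; simp [this]

/-- bit count of the lowest `M` bits -/
def pop : ℕ → ℕ → ℕ
  | 0, _ => 0
  | M + 1, z => z % 2 + pop M (z / 2)

theorem pop_add (a b z : ℕ) : pop (a + b) z = pop a z + pop b (z / 2 ^ a) := by
  induction a generalizing z with
  | zero => simp [pop]
  | succ a ih =>
    rw [Nat.succ_add]
    simp only [pop]
    rw [ih, Nat.div_div_eq_div_mul, pow_succ, mul_comm 2]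
    omega

theorem pop_mod (a z : ℕ) : pop a (z % 2 ^ a) = pop a z := by
  induction a generalizing z with
  | zero => simp [pop]
  | succ a ih =>
    simp only [pop]
    have h1 : z % 2 ^ (a + 1) % 2 = z % 2 := Nat.mod_mod_of_dvd _ (dvd_pow_self 2 (by omega))
    have h2 : z % 2 ^ (a + 1) / 2 = (z / 2) % 2 ^ a := by
      rw [pow_succ, Nat.mul_comm, Nat.mod_mul_right_div_self]
    rw [h1, h2, ih]

theorem pop_card (M z : ℕ) : pop M z = ((Finset.range M).filter (fun i => z.testBit i)).card := by
  induction M generalizing z with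
  | zero => simp [pop]
  | succ M ih =>
    rw [pop, ih, Finset.card_filter, Finset.card_filter, Finset.sum_range_succ']
    simp only [Nat.testBit_succ, Nat.testBit_zero, decide_eq_true_eq]
    rcases Nat.mod_two_eq_zero_or_one z with h | h <;> simp [h, add_comm]

theorem lk_table : ((List.range 1024).all fun i => Nat.beq (lk i) (pop 10 i)) = true := by
  decide +kernel

theorem lk_eq {i : ℕ} (h : i < 1024) : lk i = pop 10 i :=
  Nat.eq_of_beq_eq_true (List.all_eq_true.1 lk_table i (List.mem_range.2 h))

theorem pop_zero (b : ℕ) : pop b 0 = 0 := by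
  induction b with
  | zero => rfl
  | succ b ih => simp [pop, ih]

theorem popc_eq {M z : ℕ} (hM : M ≤ 20) (hz : z < 2 ^ M) : popc z = pop M z := by
  have hz' : z < 1024 * 1024 := lt_of_lt_of_le hz (by
    calc 2 ^ M ≤ 2 ^ 20 := Nat.pow_le_pow_right (by omega) hM
      _ = _ := by norm_num)
  have h1 : popc z = pop 20 z := by
    change lk (z % 1024) + lk (z / 1024) = _
    rw [lk_eq (Nat.mod_lt _ (by omega)), lk_eq (Nat.div_lt_of_lt_mul hz'), pop_add 10 10]
    have := pop_mod 10 z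
    norm_num at this ⊢
    exact this
  rw [h1]
  obtain ⟨d, hd⟩ := Nat.exists_eq_add_of_le hM
  rw [hd, pop_add, Nat.div_eq_of_lt hz, pop_zero, add_zero]

/-- `scan` with an accumulator -/
noncomputable def scanA {α : Type} (S R : List ℕ) (d : α) (k : ℕ → α) : ℕ → α :=
  List.rec (motive := fun _ => ℕ → α) k
    (fun z _ ih acc => Bool.rec (ih acc)
      (force (Nat.pow 2 (popc z)) fun b =>
        Bool.rec d (force (Nat.lor acc b) ih) (Nat.beq (Nat.land acc b) 0)) (isCirc S z)) R

theorem scanA_cons {α : Type} (S R : List ℕ) (z : ℕ) (d : α) (k : ℕ → α) (acc : ℕ) :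
    scanA S (z :: R) d k acc = if isCirc S z = true then
      (if acc &&& 2 ^ popc z = 0 then scanA S R d k (acc ||| 2 ^ popc z) else d)
      else scanA S R d k acc := by
  change (Bool.rec (scanA S R d k acc) (force (2 ^ (popc z)) fun b =>
        Bool.rec d (force (acc ||| b) (scanA S R d k)) (Nat.beq (acc &&& b) 0))
          (isCirc S z) : α) = _
  cases h : isCirc S z with
  | false => simp
  | true =>
    simp only [force_eq, if_true]
    cases h2 : Nat.beq (acc &&& 2 ^ popc z) 0 with
    | true => rw [if_pos (Nat.eq_of_beq_eq_true h2)]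
    | false => rw [if_neg (Nat.ne_of_beq_eq_false h2)]

theorem scan_dich (S R : List ℕ) (acc : ℕ) :
    (∀ (d : Bool) k, scanA S R d k acc = d) ∨
      ∃ m, ∀ (d : Bool) k, scanA S R d k acc = k m := by
  induction R generalizing acc with
  | nil => exact Or.inr ⟨acc, fun _ _ => rfl⟩
  | cons z R ih =>
    simp only [scanA_cons]
    split_ifs
    · exact ih _
    · exact Or.inl fun _ _ => rfl
    · exact ih _

theorem and_two_pow_eq_zero (a b : ℕ) : a &&& 2 ^ b = 0 ↔ a.testBit b = false := by
  constructor
  · intro h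
    have := congrArg (fun x => Nat.testBit x b) h
    simpa [Nat.testBit_and, Nat.testBit_two_pow] using this
  · intro h
    apply Nat.eq_of_testBit_eq
    intro i
    rw [Nat.testBit_and, Nat.testBit_two_pow, Nat.zero_testBit]
    by_cases hi : b = i
    · subst hi; simp [h]
    · simp [hi]

variable {V : Type*}

/-- the edge set encoded by `z` -/
noncomputable def T (ed : ℕ → Sym2 V) (M z : ℕ) : Finset (Sym2 V) :=
  open Classical in ((Finset.range M).filter fun i => z.testBit i).image ed

structure Num (ed : ℕ → Sym2 V) (M : ℕ) : Prop where
  inj : ∀ i < M, ∀ j < M, ed i = ed j → i = j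

theorem mem_T {ed : ℕ → Sym2 V} {M z : ℕ} {e : Sym2 V} :
    e ∈ T ed M z ↔ ∃ i < M, z.testBit i ∧ ed i = e := by
  simp [T, and_assoc]

theorem ed_mem_T {ed : ℕ → Sym2 V} {M z i : ℕ} (h : Num ed M) (hi : i < M) :
    ed i ∈ T ed M z ↔ z.testBit i = true := by
  rw [mem_T]
  constructor
  · rintro ⟨j, hj, h1, h2⟩
    rwa [← h.inj _ hj _ hi h2]
  · intro h1; exact ⟨i, hi, h1, rfl⟩

theorem T_subset {ed : ℕ → Sym2 V} {M z w : ℕ} (h : Num ed M) (hw : w < 2 ^ M) :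
    T ed M w ⊆ T ed M z ↔ w &&& z = w := by
  constructor
  · intro hs
    apply Nat.eq_of_testBit_eq
    intro i
    rw [Nat.testBit_and]
    by_cases hi : i < M
    · cases hb : w.testBit i with
      | false => rfl
      | true => rw [(ed_mem_T h hi).1 (hs ((ed_mem_T h hi).2 hb))]; rfl
    · rw [Nat.testBit_lt_two_pow (lt_of_lt_of_le hw (Nat.pow_le_pow_right (by omega) (by omega)))]
      rfl
  · intro he e hm
    obtain ⟨i, hi, hb, rfl⟩ := mem_T.1 hm
    rw [ed_mem_T h hi]
    rw [← he, Nat.testBit_and] at hb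
    simp at hb
    exact hb.2

theorem T_inj {ed : ℕ → Sym2 V} {M z w : ℕ} (h : Num ed M) (hw : w < 2 ^ M) (hz : z < 2 ^ M)
    (he : T ed M w = T ed M z) : w = z := by
  have h1 := (T_subset h hw (z := z)).1 he.subset
  have h2 := (T_subset h hz (z := w)).1 he.symm.subset
  rw [← h1, Nat.and_comm, h2]

theorem T_zero (ed : ℕ → Sym2 V) (M : ℕ) : T ed M 0 = ∅ := by
  simp [T]

theorem T_card {ed : ℕ → Sym2 V} {M z : ℕ} (h : Num ed M) (hM : M ≤ 20) (hz : z < 2 ^ M) :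
    (T ed M z).card = popc z := by
  classical
  rw [popc_eq hM hz, pop_card]
  unfold T
  rw [Finset.card_image_of_injOn]
  intro a ha b hb e
  simp only [Finset.coe_filter, Finset.mem_range, Set.mem_ofPred_eq] at ha hb
  exact h.inj _ ha.1 _ hb.1 e

open Classical in
theorem T_xor {ed : ℕ → Sym2 V} {M z w : ℕ} (h : Num ed M) :
    T ed M (z ^^^ w) = symmDiff (T ed M z) (T ed M w) := by
  ext e
  by_cases he : ∃ i < M, ed i = e
  · obtain ⟨i, hi, rfl⟩ := he
    rw [Finset.mem_symmDiff, ed_mem_T h hi, ed_mem_T h hi, ed_mem_T h hi, Nat.testBit_xor]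
    cases z.testBit i <;> cases w.testBit i <;> simp
  · have : ∀ x, e ∉ T ed M x := fun x hx => by
      obtain ⟨i, hi, _, h2⟩ := mem_T.1 hx
      exact he ⟨i, hi, h2⟩
    simp [Finset.mem_symmDiff, this]

open Classical in
theorem deg2_symmDiff (v : V) (A B : Finset (Sym2 V)) :
    deg2 v (symmDiff A B) = deg2 v A + deg2 v B := by
  have h1 : deg2 v A = deg2 v (A \ B) + deg2 v (A ∩ B) := by
    unfold deg2
    rw [← Finset.sum_union (Finset.disjoint_sdiff_inter A B), Finset.sdiff_union_inter]
  have h2 : deg2 v B = deg2 v (B \ A) + deg2 v (A ∩ B) := by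
    unfold deg2
    rw [Finset.inter_comm, ← Finset.sum_union (Finset.disjoint_sdiff_inter B A),
      Finset.sdiff_union_inter]
  have h3 : deg2 v (symmDiff A B) = deg2 v (A \ B) + deg2 v (B \ A) := by
    unfold deg2
    rw [← Finset.sum_union (disjoint_sdiff_sdiff)]
    rfl
  rw [h1, h2, h3]
  have : ∀ x y z : ZMod 2, x + y = x + z + (y + z) := by decide
  exact this _ _ _

open Classical in
theorem IsEv.symmDiff {A B : Finset (Sym2 V)} (hA : IsEv A) (hB : IsEv B) :
    IsEv (symmDiff A B) := fun v => by
  rw [deg2_symmDiff, hA v, hB v, add_zero]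

/-- `S` lists the codes of the even subsets of `U` -/
structure Rep (ed : ℕ → Sym2 V) (M : ℕ) (S : List ℕ) (U : Finset (Sym2 V)) : Prop where
  num : Num ed M
  nodup : S.Nodup
  lt : ∀ z ∈ S, z < 2 ^ M
  sub : ∀ z ∈ S, T ed M z ⊆ U
  ev : ∀ z ∈ S, IsEv (T ed M z)
  compl : ∀ E ⊆ U, IsEv E → ∃ z ∈ S, T ed M z = E

open Classical in
theorem Rep.step {ed : ℕ → Sym2 V} {M : ℕ} {S : List ℕ} {U : Finset (Sym2 V)} (h : Rep ed M S U)
    {g : ℕ} {e : Sym2 V} (he : e ∉ U) (hg : g < 2 ^ M) (hev : IsEv (T ed M g))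
    (hs : T ed M g ⊆ insert e U) (hm : e ∈ T ed M g) : Rep ed M (xmap g S S) (insert e U) := by
  have hx : ∀ z, T ed M (z ^^^ g) = _ := fun z => T_xor h.num
  rw [xmap_eq]
  refine ⟨h.num, ?_, ?_, ?_, ?_, ?_⟩
  · refine List.Nodup.append (h.nodup.map ?_) h.nodup ?_
    · intro a b hab
      exact Nat.xor_left_inj.1 hab
    · intro a ha ha'
      obtain ⟨z, hz, rfl⟩ := List.mem_map.1 ha
      have h1 := h.sub _ ha'
      have : e ∈ T ed M (z ^^^ g) := by
        rw [hx, Finset.mem_symmDiff]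
        exact Or.inr ⟨hm, fun h2 => he (h.sub z hz h2)⟩
      exact he (h1 this)
  · intro z hz
    rcases List.mem_append.1 hz with hz | hz
    · obtain ⟨w, hw, rfl⟩ := List.mem_map.1 hz
      exact Nat.xor_lt_two_pow (h.lt w hw) hg
    · exact h.lt z hz
  · intro z hz
    rcases List.mem_append.1 hz with hz | hz
    · obtain ⟨w, hw, rfl⟩ := List.mem_map.1 hz
      rw [hx]
      intro x hx
      rcases Finset.mem_symmDiff.1 hx with hx | hx
      · exact Finset.mem_insert_of_mem (h.sub w hw hx.1)
      · exact hs hx.1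
    · exact (h.sub z hz).trans (Finset.subset_insert _ _)
  · intro z hz
    rcases List.mem_append.1 hz with hz | hz
    · obtain ⟨w, hw, rfl⟩ := List.mem_map.1 hz
      rw [hx]
      exact (h.ev w hw).symmDiff hev
    · exact h.ev z hz
  · intro E hE hEev
    by_cases heE : e ∈ E
    · obtain ⟨z, hz, hzE⟩ := h.compl (symmDiff E (T ed M g)) (by
        intro x hx
        rcases Finset.mem_symmDiff.1 hx with hx | hx
        · rcases Finset.mem_insert.1 (hE hx.1) with rfl | h2
          · exact absurd hm hx.2
          · exact h2
        · rcases Finset.mem_insert.1 (hs hx.1) with rfl | h2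
          · exact absurd heE hx.2
          · exact h2) (hEev.symmDiff hev)
      refine ⟨z ^^^ g, List.mem_append_left _ (List.mem_map.2 ⟨z, hz, rfl⟩), ?_⟩
      rw [hx, hzE, symmDiff_symmDiff_cancel_right]
    · obtain ⟨z, hz, hzE⟩ := h.compl E (fun x hx => by
        rcases Finset.mem_insert.1 (hE hx) with rfl | h2
        · exact absurd hx heE
        · exact h2) hEev
      exact ⟨z, List.mem_append_right _ hz, hzE⟩

theorem Rep.circ_iff {ed : ℕ → Sym2 V} {M : ℕ} {S : List ℕ} {U : Finset (Sym2 V)}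
    (h : Rep ed M S U) {z : ℕ} (hz : z ∈ S) : isCirc S z = true ↔ Circuit (T ed M z) := by
  have ne : ∀ w ∈ S, w ≠ 0 → (T ed M w).Nonempty := by
    intro w hw h0
    rw [Finset.nonempty_iff_ne_empty]
    intro h1
    rw [← T_zero ed M] at h1
    exact h0 (T_inj h.num (h.lt w hw) (by positivity) h1)
  rw [isCirc_iff]
  constructor
  · rintro ⟨h0, hall⟩
    refine ⟨ne z hz h0, h.ev z hz, fun F hF hFne hFev => ?_⟩
    obtain ⟨w, hw, rfl⟩ := h.compl F (hF.trans (h.sub z hz)) hFev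
    rcases hall w hw ((T_subset h.num (h.lt w hw)).1 hF) with rfl | rfl
    · rw [T_zero] at hFne; simp at hFne
    · rfl
  · rintro ⟨h1, h2, h3⟩
    refine ⟨?_, fun w hw hwz => ?_⟩
    · rintro rfl
      rw [T_zero] at h1; simp at h1
    · by_cases h0 : w = 0
      · exact Or.inl h0
      · exact Or.inr (T_inj h.num (h.lt w hw) (h.lt z hz)
          (h3 _ ((T_subset h.num (h.lt w hw)).2 hwz) (ne w hw h0) (h.ev w hw)))

theorem scanA_spec {n : ℕ} {A : Finset (Sym2 V)} (hU : Upc n A) {ed : ℕ → Sym2 V} {M : ℕ}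
    {S : List ℕ} {U : Finset (Sym2 V)} (h : Rep ed M S U) (hM : M ≤ 20) (hUA : U ⊆ A) (R : List ℕ) :
    ∀ acc, R.Nodup → (∀ z ∈ R, z ∈ S) →
    (∀ z ∈ R, Circuit (T ed M z) → acc.testBit (T ed M z).card = false) →
    ∃ m, (∀ (d : Bool) k, scanA S R d k acc = k m) ∧
      ∀ j, m.testBit j = true ↔ acc.testBit j = true ∨
        ∃ z ∈ R, Circuit (T ed M z) ∧ (T ed M z).card = j := by
  induction R with
  | nil => intro acc _ _ _; exact ⟨acc, fun _ _ => rfl, by simp⟩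
  | cons z R ih =>
    intro acc hnd hsub hacc
    have hzS := hsub z List.mem_cons_self
    have hnd' := List.nodup_cons.1 hnd
    have hcard := T_card h.num hM (h.lt z hzS)
    by_cases hc : isCirc S z = true
    · have hcz := (h.circ_iff hzS).1 hc
      have hb := hacc z List.mem_cons_self hcz
      rw [hcard] at hb
      obtain ⟨m, hm1, hm2⟩ := ih (acc ||| 2 ^ popc z) hnd'.2
        (fun w hw => hsub w (List.mem_cons_of_mem _ hw)) (by
          intro w hw hcw
          have hwS := hsub w (List.mem_cons_of_mem _ hw)
          rw [Nat.testBit_or, hacc w (List.mem_cons_of_mem _ hw) hcw, Nat.testBit_two_pow]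
          simp only [Bool.false_or, decide_eq_false_iff_not]
          rw [← hcard]
          intro he
          have := hU.uniq _ ((h.sub z hzS).trans hUA) _ ((h.sub w hwS).trans hUA) hcz hcw he
          have := T_inj h.num (h.lt z hzS) (h.lt w hwS) this
          subst this
          exact hnd'.1 hw)
      refine ⟨m, fun d k => ?_, fun j => ?_⟩
      · rw [scanA_cons, if_pos hc, if_pos ((and_two_pow_eq_zero _ _).2 hb), hm1]
      · rw [hm2, Nat.testBit_or, Nat.testBit_two_pow, ← hcard]
        simp only [Bool.or_eq_true, decide_eq_true_eq, List.mem_cons, exists_eq_or_imp]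
        tauto
    · obtain ⟨m, hm1, hm2⟩ := ih acc hnd'.2
        (fun w hw => hsub w (List.mem_cons_of_mem _ hw))
        (fun w hw => hacc w (List.mem_cons_of_mem _ hw))
      refine ⟨m, fun d k => ?_, fun j => ?_⟩
      · rw [scanA_cons, if_neg hc, hm1]
      · rw [hm2]
        have : ¬ Circuit (T ed M z) := fun hh => hc ((h.circ_iff hzS).2 hh)
        simp [this]

theorem scan_spec {n : ℕ} {A : Finset (Sym2 V)} (hU : Upc n A) {ed : ℕ → Sym2 V} {M : ℕ}
    {S : List ℕ} {U : Finset (Sym2 V)} (h : Rep ed M S U) (hM : M ≤ 20) (hUA : U ⊆ A) :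
    ∃ m, (∀ (d : Bool) k, scan S S d k = k m) ∧
      ∀ j, m.testBit j = true ↔ ∃ E ⊆ U, Circuit E ∧ E.card = j := by
  obtain ⟨m, h1, h2⟩ := scanA_spec hU h hM hUA S 0 h.nodup (fun _ h => h) (by simp)
  refine ⟨m, h1, fun j => ?_⟩
  rw [h2]
  simp only [Nat.zero_testBit, Bool.false_eq_true, false_or]
  constructor
  · rintro ⟨z, hz, hh⟩; exact ⟨_, h.sub z hz, hh⟩
  · rintro ⟨E, hE, hc, hj⟩
    obtain ⟨z, hz, rfl⟩ := h.compl E hE hc.2.1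
    exact ⟨z, hz, hc, hj⟩

theorem scan_full {n : ℕ} (hn : 3 ≤ n) {A : Finset (Sym2 V)} (hU : Upc n A) {m : ℕ}
    (hm : ∀ j, m.testBit j = true ↔ ∃ E ⊆ A, Circuit E ∧ E.card = j) : m = 2 ^ (n + 1) - 8 := by
  have h1 : 2 ^ (n + 1) - 8 = (2 ^ (n - 2) - 1) <<< 3 := by
    obtain ⟨t, rfl⟩ : ∃ t, n = t + 2 := ⟨n - 2, by omega⟩
    rw [Nat.shiftLeft_eq, Nat.sub_mul]
    simp only [Nat.add_sub_cancel]
    congr 1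
    ring
  rw [h1]
  apply Nat.eq_of_testBit_eq
  intro i
  rw [Bool.eq_iff_iff, hm, Nat.testBit_shiftLeft, Nat.testBit_two_pow_sub_one]
  simp only [Bool.and_eq_true, decide_eq_true_eq]
  constructor
  · rintro ⟨E, hE, hc, rfl⟩
    have := hU.bd E hE hc
    omega
  · intro h
    exact hU.ex i (by omega) (by omega)

/-- the order is bounded by the number of codes -/
theorem Rep.bound {n : ℕ} {A : Finset (Sym2 V)} (hU : Upc n A) {ed : ℕ → Sym2 V} {M : ℕ}
    {S : List ℕ} (h : Rep ed M S A) : n + 1 ≤ S.length + 2 := by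
  classical
  have h0 : (0 : ℕ) ∈ S := by
    obtain ⟨z, hz, hz0⟩ := h.compl ∅ (by simp) (fun v => by simp [deg2])
    rw [← T_zero ed M] at hz0
    rwa [← T_inj h.num (h.lt z hz) (by positivity) hz0]
  have h1 : Finset.Icc 3 n ⊆ (S.toFinset.erase 0).image fun z => (T ed M z).card := by
    intro k hk
    rw [Finset.mem_Icc] at hk
    obtain ⟨E, hE, hc, hj⟩ := hU.ex k hk.1 hk.2
    obtain ⟨z, hz, rfl⟩ := h.compl E hE hc.2.1
    refine Finset.mem_image.2 ⟨z, Finset.mem_erase.2 ⟨?_, List.mem_toFinset.2 hz⟩, hj⟩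
    rintro rfl
    rw [T_zero] at hj
    simp at hj
    omega
  have h2 := (Finset.card_le_card h1).trans Finset.card_image_le
  rw [Nat.card_Icc, Finset.card_erase_of_mem (List.mem_toFinset.2 h0),
    List.toFinset_card_of_nodup h.nodup] at h2
  have := List.length_pos_of_mem h0
  omega

end Spec


section Final

variable {V : Type*}

theorem rep_base {f : ℕ → V} {n M : ℕ} {ed : ℕ → Sym2 V} (hc : Cyc f n) (hnM : n ≤ M)
    (hnum : Num ed M) (hed : ∀ i < n, ed i = s(f i, f (i + 1))) :
    Rep ed M [0, Nat.sub (Nat.pow 2 n) 1] (cycE f n) := by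
  classical
  change Rep ed M [0, 2 ^ n - 1] (cycE f n)
  have hn := hc.1
  have hT : T ed M (2 ^ n - 1) = cycE f n := by
    ext e
    rw [mem_T, cycE, Finset.mem_image]
    constructor
    · rintro ⟨i, hi, hb, rfl⟩
      rw [Nat.testBit_two_pow_sub_one, decide_eq_true_eq] at hb
      exact ⟨i, Finset.mem_range.2 hb, (hed i hb).symm⟩
    · rintro ⟨i, hi, rfl⟩
      have hi := Finset.mem_range.1 hi
      exact ⟨i, by omega, by simpa [Nat.testBit_two_pow_sub_one] using hi, hed i hi⟩
  have hp : 2 ^ 3 ≤ 2 ^ n := Nat.pow_le_pow_right (by omega) hn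
  have hp2 : 2 ^ n ≤ 2 ^ M := Nat.pow_le_pow_right (by omega) hnM
  refine ⟨hnum, ?_, ?_, ?_, ?_, ?_⟩
  · simp
    omega
  · intro z hz
    simp at hz
    rcases hz with rfl | rfl <;> omega
  · intro z hz
    simp at hz
    rcases hz with rfl | rfl
    · simp [T_zero]
    · rw [hT]
  · intro z hz
    simp at hz
    rcases hz with rfl | rfl
    · intro v; simp [T_zero, deg2]
    · rw [hT]; exact even_cycE hc
  · intro E hE hev
    rcases E.eq_empty_or_nonempty with rfl | hne
    · exact ⟨0, by simp, T_zero _ _⟩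
    · exact ⟨2 ^ n - 1, by simp, hT.trans ((circuit_cycE hc).2.2 E hE hne hev).symm⟩

theorem gen_testBit {p q n b : ℕ} (hpq : p < q) (hqn : q < n) (hb : n ≤ b) (i : ℕ) :
    (gen p q b).testBit i = true ↔ (p ≤ i ∧ i < q) ∨ i = b := by
  change (((2 ^ p - 1) ^^^ (2 ^ q - 1)) ^^^ 2 ^ b).testBit i = true ↔ _
  rw [Nat.testBit_xor, Nat.testBit_xor, Nat.testBit_two_pow_sub_one, Nat.testBit_two_pow_sub_one,
    Nat.testBit_two_pow]
  by_cases h1 : i < p <;> by_cases h2 : i < q <;> by_cases h3 : b = i <;> simp [h1, h2, h3] <;> omega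

open Classical in
theorem rep_add {f : ℕ → V} {n M : ℕ} {ed : ℕ → Sym2 V} (hc : Cyc f n)
    (hed : ∀ i < n, ed i = s(f i, f (i + 1))) {S : List ℕ} {U : Finset (Sym2 V)}
    (h : Rep ed M S U) (hU : cycE f n ⊆ U) {p q b : ℕ} (hpq : p < q) (hqn : q < n) (hb : n ≤ b)
    (hbM : b < M) {e : Sym2 V} (heb : ed b = e) (he : e = s(f p, f q)) (hn : e ∉ U) :
    Rep ed M (xmap (gen p q b) S S) (insert e U) := by
  have hT : T ed M (gen p q b) = insert e ((Finset.Ico p q).image fun i => s(f i, f (i + 1))) := by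
    ext x
    rw [mem_T, Finset.mem_insert, Finset.mem_image]
    simp only [gen_testBit hpq hqn hb, Finset.mem_Ico]
    constructor
    · rintro ⟨i, hi, h1 | rfl, rfl⟩
      · exact Or.inr ⟨i, h1, (hed i (by omega)).symm⟩
      · exact Or.inl heb
    · rintro (rfl | ⟨i, h1, rfl⟩)
      · exact ⟨b, hbM, Or.inr rfl, heb⟩
      · exact ⟨i, by omega, Or.inl h1, hed i (by omega)⟩
  have hsub : ((Finset.Ico p q).image fun i => s(f i, f (i + 1))) ⊆ U := by
    intro x hx
    obtain ⟨i, _, rfl⟩ := Finset.mem_image.1 hx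
    exact hU ((mem_cycE hc).2 ⟨i, rfl⟩)
  refine h.step hn ?_ ?_ ?_ ?_
  · apply Nat.lt_pow_two_of_testBit
    intro i hi
    rw [← Bool.not_eq_true, gen_testBit hpq hqn hb]
    omega
  · rw [hT]
    intro v
    unfold deg2
    rw [Finset.sum_insert (fun hx => hn (hsub hx)), Finset.sum_image, telescope hc v p q hpq.le, he,
      edge_ind (fun hh => hpq.ne (hc.inj (by omega) hqn hh)), CharTwo.add_self_eq_zero]
    intro i hi j hj hij
    simp only [Finset.coe_Ico, Set.mem_Ico] at hi hj
    exact hc.inj (by omega) (by omega) (hc.edge_inj hij)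
  · rw [hT]
    exact Finset.insert_subset_insert _ hsub
  · rw [hT]; exact Finset.mem_insert_self _ _

/-- numbering of the edges: first the Hamiltonian cycle, then the chords -/
noncomputable def edg (f : ℕ → V) (n : ℕ) (X Y Z : Sym2 V) (i : ℕ) : Sym2 V :=
  if i < n then s(f i, f (i + 1)) else if i = n then X else if i = n + 1 then Y else Z

theorem edg_lt (f : ℕ → V) (n : ℕ) (X Y Z : Sym2 V) (i : ℕ) (h : i < n) :
    edg f n X Y Z i = s(f i, f (i + 1)) := if_pos h

theorem edg_0 (f : ℕ → V) (n : ℕ) (X Y Z : Sym2 V) : edg f n X Y Z n = X := by simp [edg]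
theorem edg_1 (f : ℕ → V) (n : ℕ) (X Y Z : Sym2 V) : edg f n X Y Z (n + 1) = Y := by simp [edg]
theorem edg_2 (f : ℕ → V) (n : ℕ) (X Y Z : Sym2 V) : edg f n X Y Z (n + 2) = Z := by simp [edg]

theorem num_edg {f : ℕ → V} {n c : ℕ} (hc : Cyc f n) (X Y Z : Sym2 V) (hc3 : c ≤ 3)
    (hX : 1 ≤ c → X ∉ cycE f n) (hY : 2 ≤ c → Y ∉ cycE f n ∧ X ≠ Y)
    (hZ : 3 ≤ c → Z ∉ cycE f n ∧ X ≠ Z ∧ Y ≠ Z) :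
    Num (edg f n X Y Z) (n + c) := by
  have key : ∀ i < n + c, ∀ j < n + c, i < j → edg f n X Y Z i ≠ edg f n X Y Z j := by
    intro i hi j hj hij he
    by_cases h1 : j < n
    · rw [edg_lt _ _ _ _ _ _ h1, edg_lt _ _ _ _ _ _ (by omega)] at he
      exact hij.ne (hc.inj (by omega) h1 (hc.edge_inj he))
    · have hm : i < n → edg f n X Y Z j ∈ cycE f n := fun h2 => by
        rw [← he, edg_lt _ _ _ _ _ _ h2]
        exact (mem_cycE hc).2 ⟨i, rfl⟩
      obtain rfl | rfl | rfl : j = n ∨ j = n + 1 ∨ j = n + 2 := by omega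
      · rw [edg_0] at hm
        exact hX (by omega) (hm hij)
      · have := hY (by omega)
        rw [edg_1] at hm he
        by_cases h2 : i < n
        · exact this.1 (hm h2)
        · obtain rfl : i = n := by omega
          rw [edg_0] at he
          exact this.2 he
      · have := hZ (by omega)
        rw [edg_2] at hm he
        by_cases h2 : i < n
        · exact this.1 (hm h2)
        · obtain rfl | rfl : i = n ∨ i = n + 1 := by omega
          · rw [edg_0] at he
            exact this.2.1 he
          · rw [edg_1] at he
            exact this.2.2 he
  refine ⟨fun i hi j hj he => ?_⟩
  rcases lt_trichotomy i j with h | h | h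
  · exact absurd he (key i hi j hj h)
  · exact h
  · exact absurd he.symm (key j hj i hi h)

noncomputable def L0 (n : ℕ) : List ℕ := [0, Nat.sub (Nat.pow 2 n) 1]

noncomputable def L1 (n l : ℕ) : List ℕ := xmap (gen 0 l n) (L0 n) (L0 n)

noncomputable def L2 (n l p q : ℕ) : List ℕ := xmap (gen p q (n + 1)) (L1 n l) (L1 n l)

noncomputable def L3 (n l p q r s : ℕ) : List ℕ :=
  xmap (gen r s (n + 2)) (L2 n l p q) (L2 n l p q)

/-- `e` is the chord `{f p, f q}` with both arcs of length at least `l` -/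
structure Ch (f : ℕ → V) (n l p q : ℕ) (e : Sym2 V) : Prop where
  eq : e = s(f p, f q)
  a : p + l ≤ q
  b : q + l ≤ n + p
  c : q < n
  d : e ∉ cycE f n

theorem Ch.mem {f : ℕ → V} {n l p q : ℕ} {e : Sym2 V} (h : Ch f n l p q e) :
    (p, q) ∈ chords n l := by
  have h1 := h.a
  have h2 := h.b
  have h3 := h.c
  unfold chords
  rw [List.mem_flatMap]
  refine ⟨p, List.mem_range.2 (by omega), List.mem_map.2 ⟨q, List.mem_filter.2 ⟨List.mem_range.2 h3, ?_⟩, rfl⟩⟩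
  rw [Bool.and_eq_true]
  exact ⟨Nat.ble_eq_true_of_le h1, Nat.ble_eq_true_of_le h2⟩

open Classical in
theorem rep1 {f : ℕ → V} {n l c : ℕ} (hc : Cyc f n) (hl : 0 < l) (X Y Z : Sym2 V)
    (hX : Ch f n l 0 l X) (hc1 : 1 ≤ c) (hnum : Num (edg f n X Y Z) (n + c)) :
    Rep (edg f n X Y Z) (n + c) (L1 n l) (insert X (cycE f n)) :=
  rep_add hc (edg_lt f n X Y Z) (rep_base hc (by omega) hnum (edg_lt f n X Y Z))
    (Finset.Subset.refl _) hl hX.c le_rfl (by omega) (edg_0 _ _ _ _ _) hX.eq hX.d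

open Classical in
theorem rep2 {f : ℕ → V} {n l c p q : ℕ} (hc : Cyc f n) (hl : 0 < l) (X Y Z : Sym2 V)
    (hX : Ch f n l 0 l X) (hY : Ch f n l p q Y) (hXY : X ≠ Y)
    (hc1 : 2 ≤ c) (hnum : Num (edg f n X Y Z) (n + c)) :
    Rep (edg f n X Y Z) (n + c) (L2 n l p q) (insert Y (insert X (cycE f n))) :=
  rep_add hc (edg_lt f n X Y Z) (rep1 hc hl X Y Z hX (by omega) hnum)
    (Finset.subset_insert _ _) (by have := hY.a; omega) hY.c (by omega) (by omega)
    (edg_1 _ _ _ _ _) hY.eq (by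
      rw [Finset.mem_insert]; rintro (h | h)
      · exact hXY h.symm
      · exact hY.d h)

open Classical in
theorem rep3 {f : ℕ → V} {n l p q r s : ℕ} (hc : Cyc f n) (hl : 0 < l) (X Y Z : Sym2 V)
    (hX : Ch f n l 0 l X) (hY : Ch f n l p q Y) (hZ : Ch f n l r s Z)
    (hXY : X ≠ Y) (hXZ : X ≠ Z) (hYZ : Y ≠ Z) (hnum : Num (edg f n X Y Z) (n + 3)) :
    Rep (edg f n X Y Z) (n + 3) (L3 n l p q r s) (insert Z (insert Y (insert X (cycE f n)))) :=
  rep_add hc (edg_lt f n X Y Z) (rep2 hc hl X Y Z hX hY hXY (by omega) hnum)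
    ((Finset.subset_insert _ _).trans (Finset.subset_insert _ _))
    (by have := hZ.a; omega) hZ.c (by omega) (by omega)
    (edg_2 _ _ _ _ _) hZ.eq (by
      rw [Finset.mem_insert, Finset.mem_insert]; rintro (h | h | h)
      · exact hYZ h.symm
      · exact hXZ h.symm
      · exact hZ.d h)

theorem L1_length (n l : ℕ) : (L1 n l).length = 4 := by
  simp [L1, L0, xmap_eq]

theorem L2_length (n l p q : ℕ) : (L2 n l p q).length = 8 := by
  rw [L2, xmap_eq]; simp [L1_length]

theorem L3_length (n l p q r s : ℕ) : (L3 n l p q r s).length = 16 := by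
  rw [L3, xmap_eq]; simp [L2_length]

theorem beq_full (m : ℕ) : (Bool.rec true false (Nat.beq m m) : Bool) = false := by
  rw [Nat.beq_refl]

open Classical in
theorem chk1_sound {f : ℕ → V} {n l : ℕ} (hc : Cyc f n) (hn : n ≤ 17) (hl : 0 < l) {X : Sym2 V}
    (hX : Ch f n l 0 l X) (hU : Upc n (insert X (cycE f n))) (h : chk1 n l = true) : False := by
  have hnum : Num (edg f n X X X) (n + 1) :=
    num_edg hc X X X (by omega) (fun _ => hX.d) (by omega) (by omega)
  obtain ⟨m, h1, h2⟩ := scan_spec hU (rep1 hc hl X X X hX le_rfl hnum) (by omega)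
    (Finset.Subset.refl _)
  have hm := scan_full hc.1 hU h2
  unfold chk1 at h
  rw [span1_eq] at h
  change scan (L1 n l) (L1 n l) true (fun m => Bool.rec true false
    (Nat.beq m (2 ^ (n + 1) - 8))) = true at h
  rw [h1, hm, beq_full] at h
  exact Bool.false_ne_true h

open Classical in
theorem chk2_sound {f : ℕ → V} {n l p q : ℕ} (hc : Cyc f n) (hn : n ≤ 17) (hl : 0 < l) {X Y : Sym2 V}
    (hX : Ch f n l 0 l X) (hY : Ch f n l p q Y) (hXY : X ≠ Y)
    (hU : Upc n (insert Y (insert X (cycE f n)))) (h : chk2 n l = true) : False := by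
  have hnum : Num (edg f n X Y Y) (n + 2) :=
    num_edg hc X Y Y (by omega) (fun _ => hX.d) (fun _ => ⟨hY.d, hXY⟩) (by omega)
  obtain ⟨m, h1, h2⟩ := scan_spec hU (rep2 hc hl X Y Y hX hY hXY le_rfl hnum) (by omega)
    (Finset.Subset.refl _)
  have hm := scan_full hc.1 hU h2
  unfold chk2 at h
  rw [span1_eq, force_eq] at h
  have h := allB_mem h _ hY.mem
  rw [span1_eq] at h
  change scan (L2 n l p q) (L2 n l p q) true (fun m => Bool.rec true false
    (Nat.beq m (2 ^ (n + 1) - 8))) = true at h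
  rw [h1, hm, beq_full] at h
  exact Bool.false_ne_true h

theorem surv_spec (n : ℕ) (Sx : List ℕ) (C : List (ℕ × ℕ)) :
    ∃ S' : List ℕ, (∀ k, surv n Sx C k = k S') ∧ ∀ y ∈ C, ∀ m,
      (∀ (d : Bool) k, scan (xmap (gen y.1 y.2 (n + 1)) Sx Sx)
        (xmap (gen y.1 y.2 (n + 1)) Sx Sx) d k = k m) → m * 1024 + (y.1 * 32 + y.2) ∈ S' := by
  induction C with
  | nil => exact ⟨[], fun _ => rfl, by simp⟩
  | cons y C ih =>
    obtain ⟨S', h1, h2⟩ := ih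
    have hk : ∀ k, surv n Sx (y :: C) k = scan (xmap (gen y.1 y.2 (n + 1)) Sx Sx)
        (xmap (gen y.1 y.2 (n + 1)) Sx Sx) (k S')
        fun m => k ((m * 1024 + (y.1 * 32 + y.2)) :: S') := by
      intro k
      change (span1 (gen y.1 y.2 (n + 1)) Sx fun S =>
        scan S S (surv n Sx C k) fun m =>
        force (m * 1024 + (y.1 * 32 + y.2)) fun c => surv n Sx C fun S => k (c :: S)) = _
      rw [span1_eq]
      simp only [h1, force_eq]
    rcases scan_dich (xmap (gen y.1 y.2 (n + 1)) Sx Sx)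
        (xmap (gen y.1 y.2 (n + 1)) Sx Sx) 0 with h | ⟨m, h⟩
    · refine ⟨S', fun k => (hk k).trans (h _ _), fun w hw m hm => ?_⟩
      rcases List.mem_cons.1 hw with rfl | hw
      · exact absurd ((h true fun _ => false).symm.trans (hm true fun _ => false)) (by decide)
      · exact h2 w hw m hm
    · refine ⟨(m * 1024 + (y.1 * 32 + y.2)) :: S', fun k => (hk k).trans (h _ _),
        fun w hw m' hm => ?_⟩
      rcases List.mem_cons.1 hw with rfl | hw
      · have := (h true fun i => decide (i = m)).symm.trans (hm true fun i => decide (i = m))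
        simp only [decide_true] at this
        rw [of_decide_eq_true this.symm]
        exact List.mem_cons_self
      · exact List.mem_cons_of_mem _ (h2 w hw m' hm)

theorem code_mod {m p q : ℕ} (hp : p < 32) (hq : q < 32) :
    Nat.mod (m * 1024 + (p * 32 + q)) 1024 = p * 32 + q := by
  change (m * 1024 + (p * 32 + q)) % 1024 = _
  omega

theorem code_div {m p q : ℕ} (hp : p < 32) (hq : q < 32) :
    Nat.div (m * 1024 + (p * 32 + q)) 1024 = m := by
  change (m * 1024 + (p * 32 + q)) / 1024 = _
  omega

theorem code_p {p q : ℕ} (hq : q < 32) : Nat.div (p * 32 + q) 32 = p := by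
  change (p * 32 + q) / 32 = _
  omega

theorem code_q {p q : ℕ} (hq : q < 32) : Nat.mod (p * 32 + q) 32 = q := by
  change (p * 32 + q) % 32 = _
  omega

open Classical in
theorem chk3_sound_aux {f : ℕ → V} {n l p q r s : ℕ} (hc : Cyc f n) (hn : n ≤ 17) (hl : 0 < l)
    {X Y Z : Sym2 V} (hX : Ch f n l 0 l X) (hY : Ch f n l p q Y) (hZ : Ch f n l r s Z)
    (hXY : X ≠ Y) (hXZ : X ≠ Z) (hYZ : Y ≠ Z)
    (hU : Upc n (insert Z (insert Y (insert X (cycE f n))))) (h : chk3 n l = true)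
    (hlt : r * 32 + s < p * 32 + q) : False := by
  have ha := hX.a
  have hYa := hY.a
  have hYc := hY.c
  have hZa := hZ.a
  have hZc := hZ.c
  have hnum : Num (edg f n X Y Z) (n + 3) :=
    num_edg hc X Y Z (by omega) (fun _ => hX.d) (fun _ => ⟨hY.d, hXY⟩) (fun _ => ⟨hZ.d, hXZ, hYZ⟩)
  have hnum2 : Num (edg f n X Z Y) (n + 3) :=
    num_edg hc X Z Y (by omega) (fun _ => hX.d) (fun _ => ⟨hZ.d, hXZ⟩)
      (fun _ => ⟨hY.d, hXY, hYZ.symm⟩)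
  have sY : insert Y (insert X (cycE f n)) ⊆ insert Z (insert Y (insert X (cycE f n))) :=
    Finset.subset_insert _ _
  have sZ : insert Z (insert X (cycE f n)) ⊆ insert Z (insert Y (insert X (cycE f n))) :=
    Finset.insert_subset_insert _ (Finset.subset_insert _ _)
  obtain ⟨mx, x1, x2⟩ := scan_spec hU (rep1 hc hl X Y Z hX (by omega) hnum) (by omega)
    ((Finset.subset_insert _ _).trans sY)
  obtain ⟨my, y1, y2⟩ := scan_spec hU (rep2 hc hl X Y Z hX hY hXY (by omega) hnum) (by omega) sY
  obtain ⟨mz, z1, z2⟩ := scan_spec hU (rep2 hc hl X Z Y hX hZ hXZ (by omega) hnum2) (by omega) sZ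
  obtain ⟨m, h1, h2⟩ := scan_spec hU (rep3 hc hl X Y Z hX hY hZ hXY hXZ hYZ hnum) (by omega)
    (Finset.Subset.refl _)
  have hm := scan_full hc.1 hU h2
  have hmeet : (my &&& mz) &&& mx = my &&& mz := by
    apply Nat.eq_of_testBit_eq
    intro j
    rw [Nat.testBit_and]
    cases hj : (my &&& mz).testBit j with
    | false => rfl
    | true =>
      rw [Nat.testBit_and, Bool.and_eq_true] at hj
      obtain ⟨E, hE, cE, kE⟩ := (y2 j).1 hj.1
      obtain ⟨F, hF, cF, kF⟩ := (z2 j).1 hj.2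
      have hEF := hU.uniq E (hE.trans sY) F (hF.trans sZ) cE cF (kE.trans kF.symm)
      rw [Bool.true_and, x2]
      refine ⟨E, fun e he => ?_, cE, kE⟩
      rcases Finset.mem_insert.1 (hE he) with rfl | h3
      · rw [hEF] at he
        rcases Finset.mem_insert.1 (hF he) with h4 | h4
        · exact absurd h4 hYZ
        · exact h4
      · exact h3
  unfold chk3 at h
  simp only [span1_eq, force_eq] at h
  change scan (L1 n l) (L1 n l) true (fun mx =>
    surv n (L1 n l) (chords n l) (pairs n (2 ^ (n + 1) - 8) (L1 n l) mx)) = true at h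
  rw [x1] at h
  obtain ⟨S', s1, s2⟩ := surv_spec n (L1 n l) (chords n l)
  rw [s1] at h
  have my' := s2 _ hY.mem my y1
  have mz' := s2 _ hZ.mem mz z1
  unfold pairs at h
  have h := allB_mem h _ my'
  rw [force_eq, span1_eq] at h
  have h := allB_mem h _ mz'
  rw [force_eq, code_mod (by omega) (by omega), code_mod (by omega) (by omega),
    code_div (by omega) (by omega), code_div (by omega) (by omega),
    code_p (by omega), code_p (by omega), code_q (by omega), code_q (by omega)] at h
  have hb : Nat.ble (p * 32 + q) (r * 32 + s) = false := by
    rw [← Bool.not_eq_true]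
    intro hh
    have := Nat.le_of_ble_eq_true hh
    omega
  have hb2 : Nat.beq (Nat.land (Nat.land my mz) mx) (Nat.land my mz) = true := by
    change Nat.beq ((my &&& mz) &&& mx) (my &&& mz) = true
    rw [hmeet, Nat.beq_refl]
  rw [hb, force_eq, hb2] at h
  simp only [span1_eq] at h
  change scan (L3 n l p q r s) (L3 n l p q r s) true (fun m => Bool.rec true false
    (Nat.beq m (2 ^ (n + 1) - 8))) = true at h
  rw [h1, hm, beq_full] at h
  exact Bool.false_ne_true h

open Classical in
theorem chk3_sound {f : ℕ → V} {n l p q r s : ℕ} (hc : Cyc f n) (hn : n ≤ 17) (hl : 0 < l)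
    {X Y Z : Sym2 V} (hX : Ch f n l 0 l X) (hY : Ch f n l p q Y) (hZ : Ch f n l r s Z)
    (hXY : X ≠ Y) (hXZ : X ≠ Z) (hYZ : Y ≠ Z)
    (hU : Upc n (insert Z (insert Y (insert X (cycE f n))))) (h : chk3 n l = true) : False := by
  rcases lt_trichotomy (r * 32 + s) (p * 32 + q) with hlt | heq | hlt
  · exact chk3_sound_aux hc hn hl hX hY hZ hXY hXZ hYZ hU h hlt
  · have h1 := hY.c
    have h2 := hZ.c
    obtain rfl : s = q := by omega
    obtain rfl : r = p := by omega
    exact hYZ (hY.eq.trans hZ.eq.symm)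
  · rw [Finset.insert_comm] at hU
    exact chk3_sound_aux hc hn hl hX hZ hY hXZ hXY hYZ.symm hU h hlt

theorem Cyc.surj [Fintype V] {f : ℕ → V} (hc : Cyc f (Fintype.card V)) (v : V) :
    ∃ i < Fintype.card V, f i = v := by
  have hb : Function.Bijective (fun i : Fin (Fintype.card V) => f i) := by
    rw [Fintype.bijective_iff_injective_and_card]
    exact ⟨fun a b hab => Fin.ext (hc.inj a.2 b.2 hab), by simp⟩
  obtain ⟨i, hi⟩ := hb.2 v
  exact ⟨i, i.2, hi⟩

theorem Cyc.shift {f : ℕ → V} {n : ℕ} (hc : Cyc f n) (a : ℕ) : Cyc (fun i => f (a + i)) n := by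
  refine ⟨hc.1, fun i j => ?_⟩
  change f (a + i) = f (a + j) ↔ _
  rw [hc.2]
  exact ⟨fun h => Nat.ModEq.add_left_cancel' a h, fun h => h.add_left a⟩

theorem cycE_shift {f : ℕ → V} {n : ℕ} (hc : Cyc f n) (a : ℕ) :
    cycE (fun i => f (a + i)) n = cycE f n := by
  apply Finset.eq_of_subset_of_card_le
  · intro e he
    obtain ⟨i, rfl⟩ := (mem_cycE (hc.shift a)).1 he
    exact (mem_cycE hc).2 ⟨a + i, rfl⟩
  · rw [card_cycE hc, card_cycE (hc.shift a)]

theorem labelling [Fintype V] {n : ℕ} (hcard : Fintype.card V = n) {f₀ : ℕ → V} (hc : Cyc f₀ n)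
    (C : Finset (Sym2 V)) (hne : C.Nonempty) (hd : ∀ e ∈ C, e ∉ cycE f₀ n)
    (hdiag : ∀ e ∈ C, ¬ e.IsDiag) :
    ∃ f l X, Cyc f n ∧ cycE f n = cycE f₀ n ∧ 2 ≤ l ∧ 2 * l ≤ n ∧ X ∈ C ∧ Ch f n l 0 l X ∧
      ∀ e ∈ C, ∃ p q, Ch f n l p q e := by
  classical
  subst hcard
  set n := Fintype.card V with hn
  -- every chord in coordinates
  have coord : ∀ (f : ℕ → V), Cyc f n → ∀ e ∈ C, ∃ p q, p < q ∧ q < n ∧ e = s(f p, f q) := by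
    intro f hf e he
    have hde := hdiag e he
    induction e using Sym2.ind with | _ u v =>
    obtain ⟨i, hi, rfl⟩ := hf.surj u
    obtain ⟨j, hj, rfl⟩ := hf.surj v
    rcases lt_trichotomy i j with h | h | h
    · exact ⟨i, j, h, hj, rfl⟩
    · subst h; simp at hde
    · exact ⟨j, i, h, hi, Sym2.eq_swap⟩
  let P : ℕ → Prop := fun l => ∃ a, s(f₀ a, f₀ (a + l)) ∈ C
  have hPn : ∀ l ≤ n, P l → P (n - l) := by
    rintro l hl ⟨a, ha⟩
    refine ⟨a + l, ?_⟩
    have : a + l + (n - l) = a + n := by omega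
    rw [this, hc.per, Sym2.eq_swap]
    exact ha
  have hex : ∃ l, P l ∧ l < n := by
    obtain ⟨e, he⟩ := hne
    obtain ⟨p, q, h1, h2, rfl⟩ := coord f₀ hc e he
    refine ⟨q - p, ⟨p, ?_⟩, by omega⟩
    rwa [show p + (q - p) = q by omega]
  have hexP : ∃ l, P l := ⟨_, hex.choose_spec.1⟩
  obtain ⟨a, ha⟩ := Nat.find_spec hexP
  have hmin : ∀ m, P m → Nat.find hexP ≤ m := fun m hm => Nat.find_min' hexP hm
  generalize Nat.find hexP = l at ha hmin
  have hln : l < n := by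
    obtain ⟨l', h1, h2⟩ := hex
    exact lt_of_le_of_lt (hmin _ h1) h2
  have h2l := hmin _ (hPn l hln.le ⟨a, ha⟩)
  have hl2 : 2 ≤ l := by
    by_contra hcon
    obtain rfl | rfl : l = 0 ∨ l = 1 := by omega
    · exact hdiag _ ha (by simp)
    · exact hd _ ha ((mem_cycE hc).2 ⟨a, rfl⟩)
  have key : ∀ p q, p < q → q < n → s(f₀ (a + p), f₀ (a + q)) ∈ C → p + l ≤ q ∧ q + l ≤ n + p := by
    intro p q hpq hq hm
    have hP : P (q - p) := ⟨a + p, by rwa [show a + p + (q - p) = a + q by omega]⟩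
    have h1 := hmin _ hP
    have h2 := hmin _ (hPn _ (by omega) hP)
    omega
  have hs := cycE_shift hc a
  refine ⟨fun i => f₀ (a + i), l, _, hc.shift a, hs, hl2, by omega, ha, ?_, ?_⟩
  · exact ⟨rfl, by omega, by omega, hln, by rw [hs]; exact hd _ ha⟩
  · intro e he
    obtain ⟨p, q, h1, h2, h3⟩ := coord _ (hc.shift a) e he
    have := key p q h1 h2 (by rw [h3] at he; exact he)
    exact ⟨p, q, h3, this.1, this.2, h2, by rw [hs]; exact hd _ he⟩

theorem of_table {n l : ℕ} {c : ℕ → Bool} (h : allB (List.range' 2 (n / 2 - 1)) c = true)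
    (h2 : 2 ≤ l) (hl : 2 * l ≤ n) : c l = true :=
  allB_mem h l (List.mem_range'_1.2 (by omega))

set_option maxRecDepth 100000

theorem t1_4 : allB (List.range' 2 (4 / 2 - 1)) (chk1 4) = true := by decide +kernel
theorem t2_4 : allB (List.range' 2 (4 / 2 - 1)) (chk2 4) = true := by decide +kernel
theorem t2_6 : allB (List.range' 2 (6 / 2 - 1)) (chk2 6) = true := by decide +kernel
theorem t2_7 : allB (List.range' 2 (7 / 2 - 1)) (chk2 7) = true := by decide +kernel
theorem t2_9 : allB (List.range' 2 (9 / 2 - 1)) (chk2 9) = true := by decide +kernel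
theorem t3_4 : allB (List.range' 2 (4 / 2 - 1)) (chk3 4) = true := by decide +kernel
theorem t3_6 : allB (List.range' 2 (6 / 2 - 1)) (chk3 6) = true := by decide +kernel
theorem t3_7 : allB (List.range' 2 (7 / 2 - 1)) (chk3 7) = true := by decide +kernel
theorem t3_9 : allB (List.range' 2 (9 / 2 - 1)) (chk3 9) = true := by decide +kernel
theorem t3_10 : allB (List.range' 2 (10 / 2 - 1)) (chk3 10) = true := by decide +kernel
theorem t3_11 : allB (List.range' 2 (11 / 2 - 1)) (chk3 11) = true := by decide +kernel
theorem t3_12 : allB (List.range' 2 (12 / 2 - 1)) (chk3 12) = true := by decide +kernel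
theorem t3_13 : allB (List.range' 2 (13 / 2 - 1)) (chk3 13) = true := by decide +kernel
theorem t3_15 : allB (List.range' 2 (15 / 2 - 1)) (chk3 15) = true := by decide +kernel
theorem t3_16 : allB (List.range' 2 (16 / 2 - 1)) (chk3 16) = true := by decide +kernel
theorem t3_17 : allB (List.range' 2 (17 / 2 - 1)) (chk3 17) = true := by decide +kernel

theorem main [Fintype V] (G : SimpleGraph V)
    (hG : IsRPancyclic G 1) (he : G.edgeSet.ncard ≤ Fintype.card V + 3) :
    Fintype.card V ∈ ({3, 5, 8, 14} : Set ℕ) := by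
  classical
  obtain ⟨A, hA⟩ : ∃ A : Finset (Sym2 V), (A : Set (Sym2 V)) = G.edgeSet :=
    ⟨G.edgeSet.toFinite.toFinset, by simp⟩
  have hU := upc_of_pancyclic G hG A hA
  have h3 := hG.1
  obtain ⟨H, hH⟩ := Set.ncard_eq_one.1 (hG.2 _ h3 le_rfl)
  have hHm : H ∈ {H : G.Subgraph | Nonempty (H.coe ≃g cycleGraph (Fintype.card V))} := by
    rw [hH]; rfl
  obtain ⟨f₀, hc₀, hs₀⟩ := exists_cyc_of_sub h3 H hHm
  have hmem : ∀ e, e ∈ A ↔ e ∈ G.edgeSet := by intro e; rw [← hA]; rfl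
  rw [← hA, Set.ncard_coe_finset] at he
  have hsub : cycE f₀ (Fintype.card V) ⊆ A := fun e h => (hmem e).2 (hs₀ e h)
  have hCc := Finset.card_sdiff_of_subset hsub
  rw [card_cycE hc₀] at hCc
  obtain ⟨C, hC⟩ : ∃ C, C = A \ cycE f₀ (Fintype.card V) := ⟨_, rfl⟩
  rw [← hC] at hCc
  have hAC : A = C ∪ cycE f₀ (Fintype.card V) := by
    rw [hC, Finset.sdiff_union_of_subset hsub]
  have hC3 : C.card ≤ 3 := by omega
  obtain ⟨n, hn⟩ : ∃ n, n = Fintype.card V := ⟨_, rfl⟩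
  rw [← hn] at hU hc₀ hC hAC h3 ⊢
  suffices n = 3 ∨ n = 5 ∨ n = 8 ∨ n = 14 by simpa using this
  rcases C.eq_empty_or_nonempty with h0 | hne
  · rw [h0, Finset.empty_union] at hAC
    have hb := (rep_base hc₀ le_rfl
      (num_edg (c := 0) hc₀ s(f₀ 0, f₀ 0) s(f₀ 0, f₀ 0) s(f₀ 0, f₀ 0) (by omega) (by omega)
        (by omega) (by omega)) (edg_lt f₀ n _ _ _))
    rw [← hAC] at hb
    have := hb.bound hU
    simp at this
    omega
  · obtain ⟨f, l, X, hc, hcE, hl2, hln, hXC, hX, hall⟩ := labelling hn.symm hc₀ C hne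
      (fun e h => by rw [hC, Finset.mem_sdiff] at h; exact h.2)
      (fun e h => by
        rw [hC, Finset.mem_sdiff] at h
        exact G.not_isDiag_of_mem_edgeSet ((hmem e).1 h.1))
    rw [← hcE] at hAC
    have hl : 0 < l := by omega
    have hins : C = insert X (C.erase X) := (Finset.insert_erase hXC).symm
    have hcr := Finset.card_erase_of_mem hXC
    have hpos := Finset.card_pos.2 hne
    obtain h1 | h1 | h1 : (C.erase X).card = 0 ∨ (C.erase X).card = 1 ∨ (C.erase X).card = 2 := by
      omega
    · rw [Finset.card_eq_zero] at h1
      rw [h1] at hins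
      have hAX : A = insert X (cycE f n) := by
        rw [hAC, hins]; ext e; simp
      rw [hAX] at hU
      have hb := (rep1 hc hl X X X hX le_rfl
        (num_edg hc X X X (by omega) (fun _ => hX.d) (by omega) (by omega))).bound hU
      rw [L1_length] at hb
      have key : chk1 n l ≠ true := chk1_sound hc (by omega) hl hX hU
      by_contra hcon
      obtain rfl : n = 4 := by omega
      exact key (of_table t1_4 hl2 hln)
    · obtain ⟨Y, hY'⟩ := Finset.card_eq_one.1 h1
      have hYm : Y ∈ C.erase X := by rw [hY']; simp
      obtain ⟨hYX, hYC⟩ := Finset.mem_erase.1 hYm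
      obtain ⟨p, q, hY⟩ := hall Y hYC
      rw [hY'] at hins
      have hAX : A = insert Y (insert X (cycE f n)) := by
        rw [hAC, hins]; ext e; simp; tauto
      rw [hAX] at hU
      have hb := (rep2 hc hl X Y Y hX hY hYX.symm le_rfl
        (num_edg hc X Y Y (by omega) (fun _ => hX.d) (fun _ => ⟨hY.d, hYX.symm⟩)
          (by omega))).bound hU
      rw [L2_length] at hb
      have key : chk2 n l ≠ true := chk2_sound hc (by omega) hl hX hY hYX.symm hU
      by_contra hcon
      obtain rfl | rfl | rfl | rfl : n = 4 ∨ n = 6 ∨ n = 7 ∨ n = 9 := by omega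
      · exact key (of_table t2_4 hl2 hln)
      · exact key (of_table t2_6 hl2 hln)
      · exact key (of_table t2_7 hl2 hln)
      · exact key (of_table t2_9 hl2 hln)
    · obtain ⟨Y, Z, hYZ, hY'⟩ := Finset.card_eq_two.1 h1
      have hYm : Y ∈ C.erase X := by rw [hY']; simp
      have hZm : Z ∈ C.erase X := by rw [hY']; simp
      obtain ⟨hYX, hYC⟩ := Finset.mem_erase.1 hYm
      obtain ⟨hZX, hZC⟩ := Finset.mem_erase.1 hZm
      obtain ⟨p, q, hY⟩ := hall Y hYC
      obtain ⟨r, s, hZ⟩ := hall Z hZC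
      rw [hY'] at hins
      have hAX : A = insert Z (insert Y (insert X (cycE f n))) := by
        rw [hAC, hins]; ext e; simp; tauto
      rw [hAX] at hU
      have hb := (rep3 hc hl X Y Z hX hY hZ hYX.symm hZX.symm hYZ
        (num_edg hc X Y Z (by omega) (fun _ => hX.d) (fun _ => ⟨hY.d, hYX.symm⟩)
          (fun _ => ⟨hZ.d, hZX.symm, hYZ⟩))).bound hU
      rw [L3_length] at hb
      have key : chk3 n l ≠ true :=
        chk3_sound hc (by omega) hl hX hY hZ hYX.symm hZX.symm hYZ hU
      by_contra hcon
      obtain rfl | rfl | rfl | rfl | rfl | rfl | rfl | rfl | rfl | rfl | rfl :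
        n = 4 ∨ n = 6 ∨ n = 7 ∨ n = 9 ∨ n = 10 ∨ n = 11 ∨ n = 12 ∨ n = 13 ∨ n = 15 ∨ n = 16 ∨
          n = 17 := by omega
      · exact key (of_table t3_4 hl2 hln)
      · exact key (of_table t3_6 hl2 hln)
      · exact key (of_table t3_7 hl2 hln)
      · exact key (of_table t3_9 hl2 hln)
      · exact key (of_table t3_10 hl2 hln)
      · exact key (of_table t3_11 hl2 hln)
      · exact key (of_table t3_12 hl2 hln)
      · exact key (of_table t3_13 hl2 hln)
      · exact key (of_table t3_15 hl2 hln)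
      · exact key (of_table t3_16 hl2 hln)
      · exact key (of_table t3_17 hl2 hln)

end Final

end UPC

theorem upc_orders_with_at_most_three_chords {V : Type*} [Fintype V] (G : SimpleGraph V)
    (hG : IsRPancyclic G 1) (he : G.edgeSet.ncard ≤ Fintype.card V + 3) :
    Fintype.card V ∈ ({3, 5, 8, 14} : Set ℕ) := by
  exact UPC.main G hG he
end

section
/- There is no (2)-pancyclic graph on 9 vertices and no (2)-pancyclic graph on 10 vertices; moreover, there is no (2)-pancyclic graph on fewer than 8 vertices (the two (2)-pancyclic graphs of order 8 are the smallest). -/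
open SimpleGraph

namespace TwoPan

section Cycles
set_option linter.unusedSectionVars false
variable {V : Type*}

/-- A `k`-periodic enumeration of `k` distinct vertices. -/
def Per (k : ℕ) (f : ℕ → V) : Prop := 3 ≤ k ∧ ∀ a b, f a = f b ↔ a ≡ b [MOD k]

def edg (f : ℕ → V) (a : ℕ) : Sym2 V := s(f a, f (a + 1))

lemma edg_inj {k : ℕ} {f : ℕ → V} (h : Per k f) {a b : ℕ} :
    edg f a = edg f b ↔ a ≡ b [MOD k] := by
  obtain ⟨hk, h⟩ := h
  unfold edg
  rw [Sym2.eq_iff, h, h, h, h]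
  constructor
  · rintro (⟨h1, -⟩ | ⟨h1, h2⟩)
    · exact h1
    · exfalso
      have h3 : b + 2 ≡ b + 0 [MOD k] := ((h1.add_right 1).symm.trans h2 : b + 1 + 1 ≡ b [MOD k])
      have h4 := Nat.ModEq.add_left_cancel' b h3
      have h5 := (Nat.modEq_zero_iff_dvd.1 h4)
      have := Nat.le_of_dvd (by norm_num) h5
      omega
  · intro h1
    exact Or.inl ⟨h1, h1.add_right 1⟩

variable [DecidableEq V]

def cyc (k : ℕ) (f : ℕ → V) : Finset (Sym2 V) := (Finset.range k).image (edg f)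

lemma mem_cyc {k : ℕ} {f : ℕ → V} (h : Per k f) {e : Sym2 V} :
    e ∈ cyc k f ↔ ∃ a, edg f a = e := by
  unfold cyc
  rw [Finset.mem_image]
  constructor
  · rintro ⟨a, -, rfl⟩; exact ⟨a, rfl⟩
  · rintro ⟨a, rfl⟩
    refine ⟨a % k, Finset.mem_range.2 (Nat.mod_lt _ (by have := h.1; omega)), ?_⟩
    exact (edg_inj h).2 (Nat.mod_modEq _ _)

lemma edg_injOn {k : ℕ} {f : ℕ → V} (h : Per k f) :
    Set.InjOn (edg f) (Finset.range k : Set ℕ) := by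
  intro a ha b hb hab
  have := (edg_inj h).1 hab
  simp only [Finset.coe_range, Set.mem_Iio] at ha hb
  exact Nat.ModEq.eq_of_lt_of_lt this ha hb

lemma card_cyc {k : ℕ} {f : ℕ → V} (h : Per k f) : (cyc k f).card = k := by
  unfold cyc
  rw [Finset.card_image_of_injOn (edg_injOn h), Finset.card_range]

/-- incidence indicator -/
def ind (v : V) (e : Sym2 V) : ZMod 2 := if v ∈ e then 1 else 0

def Ev (F : Finset (Sym2 V)) : Prop := ∀ v, ∑ e ∈ F, ind v e = 0

lemma ind_mk {u w : V} (h : u ≠ w) (v : V) :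
    ind v s(u, w) = (if v = u then 1 else 0) + (if v = w then 1 else 0) := by
  unfold ind
  by_cases h1 : v = u
  · subst h1; simp [h]
  · simp [h1]

lemma two_zero (x : ZMod 2) : x + x = 0 := CharTwo.add_self_eq_zero x

lemma Per.ne {k : ℕ} {f : ℕ → V} (h : Per k f) (a : ℕ) : f a ≠ f (a + 1) := by
  intro h1
  have h2 : a + 0 ≡ a + 1 [MOD k] := (h.2 _ _).1 h1
  have h3 := (Nat.ModEq.add_left_cancel' a h2).symm
  have h5 := (Nat.modEq_zero_iff_dvd.1 h3)
  have := Nat.le_of_dvd (by norm_num) h5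
  have := h.1
  omega

lemma sum_path {k : ℕ} {f : ℕ → V} (h : Per k f) (v : V) (i : ℕ) (d : ℕ) :
    ∑ a ∈ Finset.Ico i (i + d), ind v (edg f a) =
      (if v = f i then 1 else 0) + (if v = f (i + d) then 1 else 0) := by
  induction d with
  | zero => simp [two_zero]
  | succ d ih =>
    rw [← add_assoc, Finset.sum_Ico_succ_top (by omega), ih, edg, ind_mk (h.ne _)]
    have := two_zero (if v = f (i + d) then (1 : ZMod 2) else 0)
    linear_combination this

lemma ev_cyc {k : ℕ} {f : ℕ → V} (h : Per k f) : Ev (cyc k f) := by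
  intro v
  unfold cyc
  rw [Finset.sum_image (edg_injOn h)]
  have := sum_path h v 0 k
  rw [zero_add, Nat.Ico_zero_eq_range] at this
  rw [this]
  have h2 : f 0 = f k := (h.2 _ _).2 (by simp [Nat.ModEq])
  rw [h2, two_zero]

lemma ev_symmDiff {F F' : Finset (Sym2 V)} (h : Ev F) (h' : Ev F') : Ev (symmDiff F F') := by
  intro v
  have h1 := h v
  have h2 := h' v
  rw [← Finset.sum_inter_add_sum_sdiff F F'] at h1
  rw [← Finset.sum_inter_add_sum_sdiff F' F, Finset.inter_comm] at h2
  rw [symmDiff_def, Finset.sup_eq_union, Finset.sum_union]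
  · have := two_zero (∑ e ∈ F ∩ F', ind v e)
    linear_combination h1 + h2 - this
  · exact disjoint_sdiff_sdiff

lemma Ev.exists_ne {F : Finset (Sym2 V)} (h : Ev F) {v : V} {e : Sym2 V} (he : e ∈ F)
    (hv : v ∈ e) : ∃ e' ∈ F, e' ≠ e ∧ v ∈ e' := by
  by_contra! hc
  have h1 := h v
  rw [Finset.sum_eq_single e] at h1
  · simp [ind, hv] at h1
  · intro b hb hne
    simp [ind, hc b hb hne]
  · intro h; exact absurd he h

lemma ev_min {k : ℕ} {f : ℕ → V} (h : Per k f) {F : Finset (Sym2 V)} (hF : F ⊆ cyc k f)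
    (hE : Ev F) (hne : F.Nonempty) : F = cyc k f := by
  obtain ⟨e, he⟩ := hne
  obtain ⟨a, rfl⟩ := (mem_cyc h).1 (hF he)
  have step : ∀ a, edg f a ∈ F → edg f (a + 1) ∈ F := by
    intro a ha
    obtain ⟨e', he', hne, hv⟩ := hE.exists_ne ha (v := f (a + 1)) (by simp [edg])
    obtain ⟨b, rfl⟩ := (mem_cyc h).1 (hF he')
    have hv' : f (a + 1) = f b ∨ f (a + 1) = f (b + 1) := by simpa [edg] using hv
    rcases hv' with hv | hv
    · rwa [(edg_inj h).2 ((h.2 _ _).1 hv)]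
    · exact absurd ((edg_inj h).2 (Nat.ModEq.add_right_cancel' 1 ((h.2 _ _).1 hv))).symm hne
  have all : ∀ t, edg f (a + t) ∈ F := by
    intro t
    induction t with
    | zero => exact he
    | succ t ih => exact step _ ih
  refine Finset.Subset.antisymm hF ?_
  intro e he
  obtain ⟨b, rfl⟩ := (mem_cyc h).1 he
  have : edg f b = edg f (a + (b + (k - 1) * a)) := by
    apply (edg_inj h).2
    have hk := h.1
    have : a + (b + (k - 1) * a) = b + k * a := by
      obtain ⟨k, rfl⟩ : ∃ m, k = m + 1 := ⟨k - 1, by omega⟩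
      simp; ring
    rw [this]
    simp [Nat.ModEq]
  rw [this]
  exact all _

lemma cycleGraph_adj_iff {k : ℕ} (hk : 3 ≤ k) (i j : Fin k) :
    (cycleGraph k).Adj i j ↔ ((i : ℕ) + 1 ≡ j [MOD k] ∨ (j : ℕ) + 1 ≡ i [MOD k]) := by
  rw [cycleGraph_adj']
  have key : ∀ i j : Fin k, (i - j).val = 1 ↔ (j : ℕ) + 1 ≡ i [MOD k] := by
    intro i j
    have hi := i.2
    have hj := j.2
    rw [Fin.sub_def]
    simp only [Nat.ModEq]
    rw [Nat.mod_eq_of_lt hi]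
    rcases Nat.lt_or_ge (j + 1 : ℕ) k with h | h
    · rw [Nat.mod_eq_of_lt h]
      rcases Nat.lt_or_ge (i : ℕ) j with h2 | h2
      · rw [Nat.mod_eq_of_lt (by omega)]; omega
      · rw [Nat.mod_eq_sub_mod (by omega), Nat.mod_eq_of_lt (by omega)]; omega
    · have : (j + 1 : ℕ) = k := by omega
      rw [this, Nat.mod_self]
      rcases Nat.lt_or_ge (k - j + i : ℕ) k with h2 | h2
      · rw [Nat.mod_eq_of_lt (by omega)]; omega
      · rw [Nat.mod_eq_sub_mod (by omega), Nat.mod_eq_of_lt (by omega)]; omega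
  rw [key, key, or_comm]

lemma copy_to_per {G : SimpleGraph V} {k : ℕ} (hk : 3 ≤ k) (φ : Copy (cycleGraph k) G) :
    ∃ f : ℕ → V, Per k f ∧ (∀ a, G.Adj (f a) (f (a + 1))) ∧ ∀ i : Fin k, f i = φ i := by
  have hk0 : 0 < k := by omega
  refine ⟨fun a => φ ⟨a % k, Nat.mod_lt _ hk0⟩, ⟨hk, ?_⟩, ?_, ?_⟩
  · intro a b
    constructor
    · intro h
      have := φ.injective h
      simpa [Nat.ModEq] using this
    · intro h
      have : a % k = b % k := h
      simp only [this]
  · intro a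
    apply φ.toHom.map_adj
    rw [cycleGraph_adj_iff hk]
    left
    exact ((Nat.mod_modEq a k).add_right 1).trans (Nat.mod_modEq _ _).symm
  · intro i
    simp [Nat.mod_eq_of_lt i.2]

lemma per_to_copy {G : SimpleGraph V} {k : ℕ} {f : ℕ → V} (h : Per k f)
    (ha : ∀ a, G.Adj (f a) (f (a + 1))) :
    ∃ φ : Copy (cycleGraph k) G, ∀ i : Fin k, φ i = f i := by
  refine ⟨⟨⟨fun i => f i, ?_⟩, ?_⟩, fun i => rfl⟩
  · intro i j hij
    rw [cycleGraph_adj_iff h.1] at hij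
    rcases hij with hij | hij
    · rw [← (h.2 _ _).2 hij]; exact ha _
    · rw [← (h.2 _ _).2 hij]; exact (ha _).symm
  · intro i j hij
    have := (h.2 _ _).1 hij
    exact Fin.ext (Nat.ModEq.eq_of_lt_of_lt this i.2 j.2)

/-- `F` is the edge set of a cycle of `G`. -/
def IsCyc (G : SimpleGraph V) (F : Finset (Sym2 V)) : Prop :=
  ∃ k f, Per k f ∧ (∀ a, G.Adj (f a) (f (a + 1))) ∧ F = cyc k f

lemma edgeSet_toSubgraph {G : SimpleGraph V} {k : ℕ} {f : ℕ → V} (h : Per k f)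
    (φ : Copy (cycleGraph k) G) (hφ : ∀ i : Fin k, φ i = f i) :
    φ.toSubgraph.edgeSet = (cyc k f : Set (Sym2 V)) := by
  have hk0 : 0 < k := by have := h.1; omega
  ext e
  rw [Finset.mem_coe, mem_cyc h]
  induction e using Sym2.ind with
  | _ x y =>
  rw [Subgraph.mem_edgeSet]
  have hval : ∀ i : Fin k, φ.toHom i = f i := hφ
  simp only [Copy.toSubgraph, Subgraph.map_adj, Relation.Map, Subgraph.top_adj]
  constructor
  · rintro ⟨i, j, hij, rfl, rfl⟩
    rw [cycleGraph_adj_iff h.1] at hij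
    rw [hval, hval]
    rcases hij with hij | hij
    · exact ⟨i, by rw [edg, (h.2 _ _).2 hij]⟩
    · exact ⟨j, by rw [edg, (h.2 _ _).2 hij, Sym2.eq_swap]⟩
  · rintro ⟨a, ha⟩
    have e1 : φ.toHom ⟨a % k, Nat.mod_lt _ hk0⟩ = f a := by
      rw [hval]; exact (h.2 _ _).2 (Nat.mod_modEq _ _)
    have e2 : φ.toHom ⟨(a + 1) % k, Nat.mod_lt _ hk0⟩ = f (a + 1) := by
      rw [hval]; exact (h.2 _ _).2 (Nat.mod_modEq _ _)
    have hadj : (cycleGraph k).Adj ⟨a % k, Nat.mod_lt _ hk0⟩ ⟨(a + 1) % k, Nat.mod_lt _ hk0⟩ := by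
      rw [cycleGraph_adj_iff h.1]
      left
      exact ((Nat.mod_modEq a k).add_right 1).trans (Nat.mod_modEq _ _).symm
    rw [edg, Sym2.eq_iff] at ha
    rcases ha with ⟨rfl, rfl⟩ | ⟨rfl, rfl⟩
    · exact ⟨_, _, hadj, e1, e2⟩
    · exact ⟨_, _, hadj.symm, e2, e1⟩

lemma verts_toSubgraph {G : SimpleGraph V} {k : ℕ} {f : ℕ → V} (h : Per k f)
    (φ : Copy (cycleGraph k) G) (hφ : ∀ i : Fin k, φ i = f i) (v : V) :
    v ∈ φ.toSubgraph.verts ↔ ∃ e ∈ cyc k f, v ∈ e := by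
  have hk0 : 0 < k := by have := h.1; omega
  have hval : ∀ i : Fin k, φ.toHom i = f i := hφ
  have : v ∈ φ.toSubgraph.verts ↔ ∃ i, φ.toHom i = v := by
    simp [Copy.toSubgraph]
  rw [this]
  constructor
  · rintro ⟨i, rfl⟩
    exact ⟨edg f i, (mem_cyc h).2 ⟨i, rfl⟩, by rw [hval]; simp [edg]⟩
  · rintro ⟨e, he, hv⟩
    obtain ⟨a, rfl⟩ := (mem_cyc h).1 he
    have hv' : v = f a ∨ v = f (a + 1) := by simpa [edg] using hv
    have key : ∀ a, φ.toHom ⟨a % k, Nat.mod_lt _ hk0⟩ = f a := by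
      intro a
      rw [hval]; exact (h.2 _ _).2 (Nat.mod_modEq _ _)
    rcases hv' with rfl | rfl
    · exact ⟨_, key _⟩
    · exact ⟨_, key _⟩

lemma cycleCount_eq (G : SimpleGraph V) {k : ℕ} (hk : 3 ≤ k) :
    cycleCount G k = {F : Finset (Sym2 V) | IsCyc G F ∧ F.card = k}.ncard := by
  unfold cycleCount
  have himg : (fun F : Finset (Sym2 V) => (F : Set (Sym2 V))) ''
      {F : Finset (Sym2 V) | IsCyc G F ∧ F.card = k} =
      (fun H : G.Subgraph => H.edgeSet) '' {H : G.Subgraph | Nonempty (H.coe ≃g cycleGraph k)} := by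
    ext E
    simp only [Set.mem_image, Set.mem_ofPred_eq]
    constructor
    · rintro ⟨F, ⟨⟨k', f, hf, ha, rfl⟩, hc⟩, rfl⟩
      rw [card_cyc hf] at hc
      subst hc
      obtain ⟨φ, hφ⟩ := per_to_copy hf ha
      exact ⟨φ.toSubgraph, ⟨φ.isoToSubgraph.symm⟩, edgeSet_toSubgraph hf φ hφ⟩
    · rintro ⟨H, ⟨ψ⟩, rfl⟩
      have hH : H ∈ Set.range (Copy.toSubgraph (A := cycleGraph k) (B := G)) := by
        rw [Copy.range_toSubgraph]; exact ⟨ψ.symm⟩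
      obtain ⟨φ, rfl⟩ := hH
      obtain ⟨f, hf, ha, hφ⟩ := copy_to_per hk φ
      exact ⟨cyc k f, ⟨⟨k, f, hf, ha, rfl⟩, card_cyc hf⟩,
        (edgeSet_toSubgraph hf φ (fun i => (hφ i).symm)).symm⟩
  have hinj : Set.InjOn (fun H : G.Subgraph => H.edgeSet)
      {H : G.Subgraph | Nonempty (H.coe ≃g cycleGraph k)} := by
    rintro H ⟨ψ⟩ H' ⟨ψ'⟩ hE
    have hE : H.edgeSet = H'.edgeSet := hE
    have hH : H ∈ Set.range (Copy.toSubgraph (A := cycleGraph k) (B := G)) := by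
      rw [Copy.range_toSubgraph]; exact ⟨ψ.symm⟩
    have hH' : H' ∈ Set.range (Copy.toSubgraph (A := cycleGraph k) (B := G)) := by
      rw [Copy.range_toSubgraph]; exact ⟨ψ'.symm⟩
    obtain ⟨φ, rfl⟩ := hH
    obtain ⟨φ', rfl⟩ := hH'
    obtain ⟨f, hf, -, hφ⟩ := copy_to_per hk φ
    obtain ⟨f', hf', -, hφ'⟩ := copy_to_per hk φ'
    have hcc : cyc k f = cyc k f' := by
      rw [edgeSet_toSubgraph hf φ (fun i => (hφ i).symm),
        edgeSet_toSubgraph hf' φ' (fun i => (hφ' i).symm)] at hE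
      exact_mod_cast hE
    apply Subgraph.ext
    · ext v
      rw [verts_toSubgraph hf φ (fun i => (hφ i).symm),
        verts_toSubgraph hf' φ' (fun i => (hφ' i).symm), hcc]
    · ext x y
      rw [← Subgraph.mem_edgeSet, ← Subgraph.mem_edgeSet, hE]
  rw [← Set.InjOn.ncard_image hinj, ← himg, Set.ncard_image_of_injective]
  exact Finset.coe_injective

lemma not_acyclic [Fintype V] (H : SimpleGraph V) (h : ∀ x y, H.Adj x y → ∃ z, z ≠ x ∧ H.Adj y z)
    {u v : V} (huv : H.Adj u v) : ¬ H.IsAcyclic := by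
  classical
  intro hac
  let c := H.connectedComponentMk u
  have ht := hac.isTree_connectedComponent c
  have hu : u ∈ c.supp := rfl
  have hv : v ∈ c.supp := c.mem_supp_of_adj_mem_supp hu huv
  have : Nontrivial c := ⟨⟨u, hu⟩, ⟨v, hv⟩, by simpa using huv.ne⟩
  obtain ⟨y, hy⟩ := ht.exists_vert_degree_one_of_nontrivial
  rw [degree_eq_one_iff_existsUnique_adj] at hy
  obtain ⟨x, hx, huniq⟩ := hy
  have hx' : H.Adj y.1 x.1 := hx
  obtain ⟨z, hz, hyz⟩ := h _ _ hx'.symm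
  have hzc : z ∈ c.supp := c.mem_supp_of_adj_mem_supp y.2 hyz
  have := huniq ⟨z, hzc⟩ hyz
  exact hz (congrArg Subtype.val this)

lemma exists_cyc_subset [Fintype V] {F : Finset (Sym2 V)} (h : Ev F) (hne : F.Nonempty)
    (hd : ∀ e ∈ F, ¬ e.IsDiag) :
    ∃ k f, Per k f ∧ cyc k f ⊆ F := by
  set H : SimpleGraph V := SimpleGraph.fromEdgeSet (F : Set (Sym2 V)) with hH
  have hadj : ∀ x y, H.Adj x y ↔ s(x, y) ∈ F := by
    intro x y
    simp only [hH, fromEdgeSet_adj, Finset.mem_coe]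
    constructor
    · exact fun h => h.1
    · intro h1
      exact ⟨h1, fun hxy => hd _ h1 (by simp [hxy])⟩
  obtain ⟨e, he⟩ := hne
  have hna : ¬ H.IsAcyclic := by
    induction e using Sym2.ind with
    | _ u v =>
    refine not_acyclic H ?_ ((hadj u v).2 he)
    intro x y hxy
    obtain ⟨e', he', hne, hy⟩ := h.exists_ne ((hadj x y).1 hxy) (v := y) (by simp)
    obtain ⟨z, rfl⟩ := hy
    refine ⟨z, ?_, (hadj _ _).2 he'⟩
    rintro rfl
    exact hne Sym2.eq_swap
  rw [isAcyclic_iff_free_cycleGraph] at hna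
  push Not at hna
  obtain ⟨k, hk, hfree⟩ := hna
  obtain ⟨φ⟩ : (cycleGraph k) ⊑ H := by simpa [Free] using hfree
  obtain ⟨f, hf, ha, -⟩ := copy_to_per hk φ
  refine ⟨k, f, hf, ?_⟩
  intro e he
  obtain ⟨a, rfl⟩ := (mem_cyc hf).1 he
  exact (hadj _ _).1 (ha a)

end Cycles
section Search

/-- Evaluate the number before passing it on (for speed in the kernel). -/
def force (n : ℕ) (k : ℕ → Bool) : Bool :=
  @Nat.rec (fun _ => Bool) (k 0) (fun m _ => k (Nat.succ m)) n

/-- No element of `L` is a submask of `m`. -/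
def minimal (m : ℕ) (L : List ℕ) : Bool :=
  @List.rec ℕ (fun _ => Bool) true
    (fun y _ ih => @Bool.rec (fun _ => Bool) ih false (Nat.beq (Nat.land y m) y)) L

/-- Process the new even subgraphs, recording the lengths of cycles seen once / twice. -/
def proc (L : List ℕ) (c : ℕ) (k : List ℕ → ℕ → ℕ → Bool) (l : List ℕ) :
    List ℕ → ℕ → ℕ → Bool :=
  @List.rec ℕ (fun _ => List ℕ → ℕ → ℕ → Bool) k
   (fun y _ ih acc a1 a2 =>
    force (Nat.xor c y) fun m =>
      @Bool.rec (fun _ => Bool)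
        (ih (m :: acc) a1 a2)
        (force (Nat.pow 2 (Nat.mod m 15)) fun b =>
          @Bool.rec (fun _ => Bool) true
            (force (Nat.lor a2 (Nat.land a1 b)) fun a2' =>
            force (Nat.lor a1 b) fun a1' =>
            ih (m :: acc) a1' a2') (Nat.beq (Nat.land a2 b) 0))
        (minimal m L)) l

def incl (c : ℕ) (k : ℕ → List ℕ → ℕ → ℕ → Bool) (b : ℕ) (L : List ℕ) (a1 a2 : ℕ) : Bool :=
  force (Nat.mul b 16) fun b' => force (Nat.add c b) fun f => proc L f (k b') (0 :: L) L a1 a2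

def search (full : ℕ) (l : List ℕ) : ℕ → List ℕ → ℕ → ℕ → Bool :=
  @List.rec ℕ (fun _ => ℕ → List ℕ → ℕ → ℕ → Bool)
  (fun _ _ _ a2 => Bool.not (Nat.beq (Nat.land a2 full) full))
  (fun c _ ih b L a1 a2 => @Bool.rec (fun _ => Bool) false
     (incl c ih b L a1 a2) (ih b L a1 a2)) l

/-- Mask of a path on the rim. -/
def pm (p : ℕ × ℕ) : ℕ := Nat.div (Nat.sub (Nat.pow 16 p.2) (Nat.pow 16 p.1)) 15

lemma force_eq (n : ℕ) (k : ℕ → Bool) : force n k = k n := by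
  cases n <;> rfl

lemma minimal_iff (m : ℕ) (L : List ℕ) :
    minimal m L = true ↔ ∀ y ∈ L, ¬ (y &&& m = y) := by
  induction L with
  | nil => simp [minimal]
  | cons y L ih =>
    have h : minimal m (y :: L) =
      @Bool.rec (fun _ => Bool) (minimal m L) false (Nat.beq (y &&& m) y) := rfl
    rw [h, List.forall_mem_cons, ← ih]
    by_cases hy : y &&& m = y
    · have : Nat.beq (y &&& m) y = true := by rw [Nat.beq_eq]; exact hy
      rw [this]; simp [hy]
    · have : Nat.beq (y &&& m) y = false := by
        rw [← Bool.not_eq_true, Nat.beq_eq]; exact hy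
      rw [this]; simp [hy]

/-- Counts of elements satisfying `C` of each size, recorded in two bit masks. -/
def Counts {α : Type*} (C : α → Prop) [DecidablePred C] (sz : α → ℕ) (l : List α)
    (a1 a2 : ℕ) : Prop :=
  ∀ k, (a1.testBit k = true ↔ 1 ≤ l.countP (fun F => decide (C F ∧ sz F = k))) ∧
    (a2.testBit k = true ↔ 2 ≤ l.countP (fun F => decide (C F ∧ sz F = k)))

lemma proc_spec {α : Type*} (C : α → Prop) [DecidablePred C] (sz : α → ℕ) (msk : α → ℕ)
    (g : α → α) (L : List ℕ) (c : ℕ) (k : List ℕ → ℕ → ℕ → Bool)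
    (h5 : ∀ T : List α, T.Nodup → ∀ k, T.countP (fun F => decide (C F ∧ sz F = k)) ≤ 2)
    (lF : List α) :
    (∀ y ∈ lF, c ^^^ msk y = msk (g y)) →
    (∀ y ∈ lF, minimal (msk (g y)) L = true ↔ C (g y)) →
    (∀ y ∈ lF, C (g y) → msk (g y) % 15 = sz (g y)) →
    ∀ (accF : List α) (a1 a2 : ℕ), ((lF.map g).reverse ++ accF).Nodup →
    Counts C sz accF a1 a2 →
    proc L c k (lF.map msk) (accF.map msk) a1 a2 = true →
    ∃ a1' a2', Counts C sz ((lF.map g).reverse ++ accF) a1' a2' ∧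
      k (((lF.map g).reverse ++ accF).map msk) a1' a2' = true := by
  induction lF with
  | nil =>
    intro _ _ _ accF a1 a2 _ hc hp
    have hp' : k (accF.map msk) a1 a2 = true := hp
    exact ⟨a1, a2, by simpa using hc, by simpa using hp'⟩
  | cons y l ih =>
    intro h1 h2 h3 accF a1 a2 hnd hc hp
    have ih' := ih (fun z hz => h1 z (List.mem_cons_of_mem _ hz))
      (fun z hz => h2 z (List.mem_cons_of_mem _ hz))
      (fun z hz => h3 z (List.mem_cons_of_mem _ hz))
    have hlist : ((y :: l).map g).reverse ++ accF = (l.map g).reverse ++ (g y :: accF) := by simp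
    rw [hlist] at hnd ⊢
    have hnd2 : (g y :: accF).Nodup := hnd.of_append_right
    have e1 := h1 y List.mem_cons_self
    have e2 := h2 y List.mem_cons_self
    have e3 := h3 y List.mem_cons_self
    have hunf : proc L c k ((y :: l).map msk) (accF.map msk) a1 a2 =
      force (c ^^^ msk y) fun m =>
      @Bool.rec (fun _ => Bool)
        (proc L c k (l.map msk) (m :: accF.map msk) a1 a2)
        (force (2 ^ (m % 15)) fun b =>
          @Bool.rec (fun _ => Bool) true
            (force (a2 ||| (a1 &&& b)) fun a2' =>
            force (a1 ||| b) fun a1' =>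
            proc L c k (l.map msk) (m :: accF.map msk) a1' a2') (Nat.beq (a2 &&& b) 0))
        (minimal m L) := rfl
    rw [hunf, force_eq, e1] at hp
    by_cases hC : C (g y)
    · rw [e2.2 hC] at hp
      simp only [force_eq] at hp
      rw [e3 hC] at hp
      set s := sz (g y) with hs
      have hcount : ∀ k, (g y :: accF).countP (fun F => decide (C F ∧ sz F = k)) =
          accF.countP (fun F => decide (C F ∧ sz F = k)) + if s = k then 1 else 0 := by
        intro k
        rw [List.countP_cons]
        simp [hC, hs]
      have hno : a2.testBit s = false := by
        by_contra hcon
        rw [Bool.not_eq_false] at hcon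
        have := ((hc s).2).1 hcon
        have h6 := h5 _ hnd2 s
        rw [hcount] at h6
        rw [if_pos rfl] at h6
        omega
      have hb : Nat.beq (a2 &&& 2 ^ s) 0 = true := by
        rw [Nat.beq_eq]
        apply Nat.eq_of_testBit_eq
        intro i
        rw [Nat.testBit_and, Nat.testBit_two_pow, Nat.zero_testBit]
        by_cases hi : s = i
        · subst hi; simp [hno]
        · simp [hi]
      rw [hb] at hp
      refine ih' (g y :: accF) _ _ hnd ?_ hp
      intro k
      rw [hcount, Nat.testBit_or, Nat.testBit_or, Nat.testBit_and, Nat.testBit_two_pow]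
      obtain ⟨c1, c2⟩ := hc k
      by_cases hi : s = k
      · simp only [hi, decide_true, Bool.and_true, Bool.or_true, if_true, Bool.or_eq_true, c1, c2]
        constructor
        · simp
        · omega
      · simp only [hi, decide_false, Bool.and_false, Bool.or_false, if_false, c1, c2, add_zero]
        simp
    · have : minimal (msk (g y)) L = false := by
        rw [← Bool.not_eq_true, e2]; exact hC
      rw [this] at hp
      refine ih' (g y :: accF) a1 a2 hnd ?_ hp
      intro k
      rw [List.countP_cons]
      simpa [hC] using hc k

end Search

section Mask
variable {E : Type*} [DecidableEq E]

def mask (pos : E → ℕ) (F : Finset E) : ℕ := ∑ e ∈ F, 2 ^ (4 * pos e)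

lemma testBit_mask {pos : E → ℕ} {F : Finset E} (h : Set.InjOn pos F) (i : ℕ) :
    (mask pos F).testBit i = true ↔ ∃ e ∈ F, 4 * pos e = i := by
  have h1 : mask pos F = ∑ i ∈ F.image (fun e => 4 * pos e), 2 ^ i := by
    rw [Finset.sum_image]
    · rfl
    · intro a ha b hb hab
      exact h ha hb (by simpa using hab)
  rw [← Nat.mem_bitIndices, ← List.mem_toFinset, h1, Finset.toFinset_bitIndices_sum_two_pow]
  simp

lemma testBit_mask_pos {pos : E → ℕ} {S F : Finset E} (h : Set.InjOn pos S) (hF : F ⊆ S)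
    {e : E} (he : e ∈ S) : (mask pos F).testBit (4 * pos e) = true ↔ e ∈ F := by
  rw [testBit_mask (h.mono (by exact_mod_cast hF))]
  constructor
  · rintro ⟨e', he', h1⟩
    have : e' = e := h (hF he') he (by omega)
    exact this ▸ he'
  · intro h; exact ⟨e, h, rfl⟩

lemma mask_xor {pos : E → ℕ} {S F F' : Finset E} (h : Set.InjOn pos S) (hF : F ⊆ S)
    (hF' : F' ⊆ S) : mask pos F ^^^ mask pos F' = mask pos (symmDiff F F') := by
  have hsd : symmDiff F F' ⊆ S := by
    intro e he
    rw [Finset.mem_symmDiff] at he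
    rcases he with he | he
    · exact hF he.1
    · exact hF' he.1
  apply Nat.eq_of_testBit_eq
  intro i
  rw [Nat.testBit_xor]
  by_cases hi : ∃ e ∈ S, 4 * pos e = i
  · obtain ⟨e, he, rfl⟩ := hi
    have h1 := testBit_mask_pos h hF he
    have h2 := testBit_mask_pos h hF' he
    have h3 := testBit_mask_pos h hsd he
    rw [Finset.mem_symmDiff] at h3
    rw [Bool.eq_iff_iff, h3, ← h1, ← h2]
    cases (mask pos F).testBit (4 * pos e) <;> cases (mask pos F').testBit (4 * pos e) <;> simp
  · have key : ∀ T ⊆ S, (mask pos T).testBit i = false := by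
      intro T hT
      rw [← Bool.not_eq_true, testBit_mask (h.mono (by exact_mod_cast hT))]
      rintro ⟨e, he, h1⟩
      exact hi ⟨e, hT he, h1⟩
    rw [key _ hF, key _ hF', key _ hsd]; rfl

lemma mask_land {pos : E → ℕ} {S F F' : Finset E} (h : Set.InjOn pos S) (hF : F ⊆ S)
    (hF' : F' ⊆ S) : mask pos F &&& mask pos F' = mask pos F ↔ F ⊆ F' := by
  constructor
  · intro h1 e he
    have h2 := (testBit_mask_pos h hF (hF he)).2 he
    rw [← h1, Nat.testBit_and, Bool.and_eq_true] at h2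
    exact (testBit_mask_pos h hF' (hF he)).1 h2.2
  · intro h1
    apply Nat.eq_of_testBit_eq
    intro i
    rw [Nat.testBit_and, Bool.and_eq_left_iff_imp]
    rw [testBit_mask (h.mono (by exact_mod_cast hF)), testBit_mask (h.mono (by exact_mod_cast hF'))]
    rintro ⟨e, he, h2⟩
    exact ⟨e, h1 he, h2⟩

lemma mask_mod (pos : E → ℕ) (F : Finset E) : mask pos F % 15 = F.card % 15 := by
  induction F using Finset.induction_on with
  | empty => simp [mask]
  | insert a F ha ih =>
    have h1 : mask pos (insert a F) = 2 ^ (4 * pos a) + mask pos F := Finset.sum_insert ha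
    have h2 : 2 ^ (4 * pos a) % 15 = 1 := by
      rw [pow_mul, Nat.pow_mod]; simp
    rw [h1, Finset.card_insert_of_notMem ha]
    omega

lemma mask_congr {pos pos' : E → ℕ} {F : Finset E} (h : ∀ e ∈ F, pos e = pos' e) :
    mask pos F = mask pos' F := by
  unfold mask
  exact Finset.sum_congr rfl (fun e he => by rw [h e he])

end Mask

lemma pm_eq (i d : ℕ) : pm (i, i + d) = ∑ a ∈ Finset.Ico i (i + d), 2 ^ (4 * a) := by
  have h : 15 * ∑ a ∈ Finset.Ico i (i + d), 2 ^ (4 * a) + 16 ^ i = 16 ^ (i + d) := by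
    induction d with
    | zero => simp
    | succ d ih =>
      rw [← add_assoc, Finset.sum_Ico_succ_top (by omega), mul_add, pow_succ, ← ih, pow_mul]
      norm_num
      ring_nf
      ring_nf at ih
      omega
  change (16 ^ (i + d) - 16 ^ i) / 15 = _
  rw [← h]
  omega

section Main
set_option linter.unusedSectionVars false
variable {V : Type*} [Fintype V] [DecidableEq V]

/-- Invariant of the search over the chords. -/
structure Inv (G : SimpleGraph V) [DecidablePred (IsCyc G)] (n : ℕ) (u : ℕ → V)
    (S : Finset (Sym2 V)) (pos : Sym2 V → ℕ) (D : ℕ) (LF : List (Finset (Sym2 V)))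
    (a1 a2 : ℕ) : Prop where
  sub : ∀ e ∈ S, e ∈ G.edgeSet
  rim : cyc n u ⊆ S
  inj : Set.InjOn pos S
  lt : ∀ e ∈ S, pos e < D
  posr : ∀ a < n, pos (edg u a) = a
  nd : LF.Nodup
  mem : ∀ F, F ∈ LF ↔ F ⊆ S ∧ Ev F ∧ F.Nonempty
  cnt : Counts (IsCyc G) Finset.card LF a1 a2

lemma isCyc_of_sub {G : SimpleGraph V} {k : ℕ} {f : ℕ → V} (h : Per k f)
    (hs : ∀ e ∈ cyc k f, e ∈ G.edgeSet) : IsCyc G (cyc k f) :=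
  ⟨k, f, h, fun a => hs _ ((mem_cyc h).2 ⟨a, rfl⟩), rfl⟩

lemma IsCyc.mem {G : SimpleGraph V} {F : Finset (Sym2 V)} (h : IsCyc G F) :
    ∀ e ∈ F, e ∈ G.edgeSet := by
  obtain ⟨k, f, h, h1, rfl⟩ := h
  intro e he
  obtain ⟨a, rfl⟩ := (mem_cyc h).1 he
  exact h1 a

lemma IsCyc.ev {G : SimpleGraph V} {F : Finset (Sym2 V)} (h : IsCyc G F) : Ev F := by
  obtain ⟨k, f, h, h1, rfl⟩ := h
  exact ev_cyc h

lemma IsCyc.nonempty {G : SimpleGraph V} {F : Finset (Sym2 V)} (h : IsCyc G F) :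
    F.Nonempty := by
  obtain ⟨k, f, h, h1, rfl⟩ := h
  exact ⟨_, (mem_cyc h).2 ⟨0, rfl⟩⟩

lemma IsCyc.card_ge {G : SimpleGraph V} {F : Finset (Sym2 V)} (h : IsCyc G F) :
    3 ≤ F.card := by
  obtain ⟨k, f, h, h1, rfl⟩ := h
  rw [card_cyc h]; exact h.1

lemma IsCyc.card_le {G : SimpleGraph V} {F : Finset (Sym2 V)} (h : IsCyc G F) :
    F.card ≤ Fintype.card V := by
  obtain ⟨k, f, h, h1, rfl⟩ := h
  rw [card_cyc h]
  have : Function.Injective (fun i : Fin k => f i) := by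
    intro i j hij
    have := (h.2 _ _).1 hij
    exact Fin.ext (Nat.ModEq.eq_of_lt_of_lt this i.2 j.2)
  simpa using Fintype.card_le_of_injective _ this

lemma incl_spec {G : SimpleGraph V} [DecidablePred (IsCyc G)] {n : ℕ} {u : ℕ → V}
    {S : Finset (Sym2 V)} {pos : Sym2 V → ℕ} {D : ℕ} {LF : List (Finset (Sym2 V))} {a1 a2 : ℕ}
    (hu : Per n u) (hI : Inv G n u S pos D LF a1 a2)
    (h5 : ∀ T : List (Finset (Sym2 V)), T.Nodup →
      ∀ k, T.countP (fun F => decide (IsCyc G F ∧ F.card = k)) ≤ 2)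
    (hsz : ∀ F, IsCyc G F → F.card < 15) {i d : ℕ} (hin : i + d < n)
    (hcS : s(u i, u (i + d)) ∉ S) (hcG : G.Adj (u i) (u (i + d)))
    (k : ℕ → List ℕ → ℕ → ℕ → Bool)
    (hp : incl (pm (i, i + d)) k (2 ^ (4 * D)) (LF.map (mask pos)) a1 a2 = true) :
    ∃ pos' LF' a1' a2', Inv G n u (insert s(u i, u (i + d)) S) pos' (D + 1) LF' a1' a2' ∧
      k (2 ^ (4 * (D + 1))) (LF'.map (mask pos')) a1' a2' = true := by
  set c : Sym2 V := s(u i, u (i + d)) with hc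
  set P : Finset (Sym2 V) := (Finset.Ico i (i + d)).image (edg u) with hP
  set fc : Finset (Sym2 V) := insert c P with hfc
  have hPS : P ⊆ S := by
    intro e he
    obtain ⟨a, -, rfl⟩ := Finset.mem_image.1 he
    exact hI.rim ((mem_cyc hu).2 ⟨a, rfl⟩)
  have hcP : c ∉ P := fun h => hcS (hPS h)
  have hinjP : Set.InjOn (edg u) (Finset.Ico i (i + d) : Set ℕ) := by
    apply (edg_injOn hu).mono
    intro a ha
    simp only [Finset.coe_Ico, Set.mem_Ico, Finset.coe_range, Set.mem_Iio] at ha ⊢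
    omega
  have hne : u i ≠ u (i + d) := hcG.ne
  have hEfc : Ev fc := by
    intro v
    rw [hfc, Finset.sum_insert hcP, hP, Finset.sum_image hinjP, sum_path hu, hc, ind_mk hne]
    exact two_zero _
  set pos' := Function.update pos c D with hpos'
  have hposc : pos' c = D := by simp [hpos']
  have hposS : ∀ e ∈ S, pos' e = pos e := by
    intro e he
    rw [hpos', Function.update_of_ne]
    rintro rfl; exact hcS he
  have hinj' : Set.InjOn pos' (insert c S : Finset (Sym2 V)) := by
    intro e he e' he' hee
    rw [Finset.mem_coe, Finset.mem_insert] at he he'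
    rcases he with rfl | he <;> rcases he' with h' | he'
    · exact h'.symm
    · have := hI.lt _ he'; rw [hposc, hposS _ he'] at hee; omega
    · subst h'
      have := hI.lt _ he; rw [hposc, hposS _ he] at hee; omega
    · rw [hposS _ he, hposS _ he'] at hee
      exact hI.inj he he' hee
  have hSS : S ⊆ insert c S := Finset.subset_insert _ _
  have hfcS : fc ⊆ insert c S := Finset.insert_subset_insert _ hPS
  have hmfc : mask pos' fc = pm (i, i + d) + 2 ^ (4 * D) := by
    unfold mask
    rw [hfc, Finset.sum_insert hcP, hP, Finset.sum_image hinjP, hposc, pm_eq, add_comm]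
    congr 1
    apply Finset.sum_congr rfl
    intro a ha
    rw [Finset.mem_Ico] at ha
    rw [hposS _ (hI.rim ((mem_cyc hu).2 ⟨a, rfl⟩)), hI.posr a (by omega)]
  have hmLF : LF.map (mask pos) = LF.map (mask pos') := by
    apply List.map_congr_left
    intro F hF
    apply mask_congr
    intro e he
    exact (hposS e (((hI.mem F).1 hF).1 he)).symm
  have hempty : ∅ ∉ LF := fun h => by simpa using ((hI.mem _).1 h).2.2
  have hmem0 : ∀ y, y ∈ ∅ :: LF ↔ y ⊆ S ∧ Ev y := by
    intro y
    rw [List.mem_cons, hI.mem]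
    constructor
    · rintro (rfl | h)
      · exact ⟨by simp, by intro v; simp⟩
      · exact ⟨h.1, h.2.1⟩
    · rintro ⟨h1, h2⟩
      rcases Finset.eq_empty_or_nonempty y with h | h
      · exact Or.inl h
      · exact Or.inr ⟨h1, h2, h⟩
  set g : Finset (Sym2 V) → Finset (Sym2 V) := fun y => symmDiff fc y with hg
  have hcfc : c ∈ fc := Finset.mem_insert_self _ _
  have hgc : ∀ y ⊆ S, c ∈ g y := by
    intro y hy
    rw [hg, Finset.mem_symmDiff]
    exact Or.inl ⟨hcfc, fun h => hcS (hy h)⟩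
  have hgS : ∀ y ⊆ S, g y ⊆ insert c S := by
    intro y hy e he
    rw [hg, Finset.mem_symmDiff] at he
    rcases he with he | he
    · exact hfcS he.1
    · exact hSS (hy he.1)
  have hgg : ∀ y, g (g y) = y := by
    intro y
    simp [hg]
  have hGS : ∀ e ∈ insert c S, e ∈ G.edgeSet := by
    intro e he
    rcases Finset.mem_insert.1 he with rfl | he
    · exact hcG
    · exact hI.sub e he
  have hmin : ∀ y ∈ ∅ :: LF, minimal (mask pos' (g y)) (LF.map (mask pos')) = true ↔
      IsCyc G (g y) := by
    intro y hy
    obtain ⟨hyS, hyE⟩ := (hmem0 y).1 hy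
    have hEg : Ev (g y) := ev_symmDiff hEfc hyE
    rw [minimal_iff]
    constructor
    · intro h
      have h' : ∀ F ∈ LF, ¬ F ⊆ g y := by
        intro F hF hsub
        exact h _ (List.mem_map_of_mem hF)
          ((mask_land hinj' (((hI.mem F).1 hF).1.trans hSS) (hgS y hyS)).2 hsub)
      obtain ⟨k, f, hk, hsub⟩ := exists_cyc_subset hEg ⟨c, hgc y hyS⟩ (by
        intro e he
        exact SimpleGraph.not_isDiag_of_mem_edgeSet G (hGS e (hgS y hyS he)))
      have hCyc : IsCyc G (cyc k f) :=
        isCyc_of_sub hk (fun e he => hGS e (hgS y hyS (hsub he)))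
      by_cases hcC : c ∈ cyc k f
      · have : cyc k f = g y := by
          by_contra hne2
          have hsd : symmDiff (cyc k f) (g y) ⊆ g y := by
            intro e he
            rw [Finset.mem_symmDiff] at he
            rcases he with he | he
            · exact hsub he.1
            · exact he.1
          refine h' (symmDiff (cyc k f) (g y)) ?_ hsd
          rw [hI.mem]
          refine ⟨?_, ev_symmDiff (ev_cyc hk) hEg, ?_⟩
          · intro e he
            have h1 := hgS y hyS (hsd he)
            rcases Finset.mem_insert.1 h1 with rfl | h1
            · rw [Finset.mem_symmDiff] at he
              have := hgc y hyS
              tauto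
            · exact h1
          · rw [Finset.nonempty_iff_ne_empty]
            intro h0
            exact hne2 (symmDiff_eq_bot.1 h0)
        rw [← this]; exact hCyc
      · exfalso
        refine h' _ ((hI.mem _).2 ⟨?_, ev_cyc hk, hCyc.nonempty⟩) hsub
        intro e he
        rcases Finset.mem_insert.1 (hgS y hyS (hsub he)) with rfl | h1
        · exact absurd he hcC
        · exact h1
    · intro hC m hm
      obtain ⟨F, hF, rfl⟩ := List.mem_map.1 hm
      obtain ⟨hFS, hFE, hFn⟩ := (hI.mem F).1 hF
      rw [mask_land hinj' (hFS.trans hSS) (hgS y hyS)]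
      intro hsub
      have hc1 := hgc y hyS
      obtain ⟨k, f, hk, -, hkf⟩ := hC
      rw [hkf] at hsub hc1
      have := ev_min hk hsub hFE hFn
      rw [← this] at hc1
      exact hcS (hFS hc1)
  have hnd : (((∅ :: LF).map g).reverse ++ LF).Nodup := by
    rw [List.nodup_append]
    refine ⟨?_, hI.nd, ?_⟩
    · rw [List.nodup_reverse]
      refine List.Nodup.map ?_ (List.nodup_cons.2 ⟨hempty, hI.nd⟩)
      intro a b hab
      rw [← hgg a, hab, hgg b]
    · intro a ha b hb hab
      rw [List.mem_reverse, List.mem_map] at ha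
      obtain ⟨y, hy, rfl⟩ := ha
      have h1 := hgc y ((hmem0 y).1 hy).1
      rw [hab] at h1
      exact hcS (((hI.mem b).1 hb).1 h1)
  have hp2 : proc (LF.map (mask pos')) (mask pos' fc) (k (2 ^ (4 * (D + 1))))
      ((∅ :: LF).map (mask pos')) (LF.map (mask pos')) a1 a2 = true := by
    unfold incl at hp
    rw [force_eq, force_eq, hmLF] at hp
    have e1 : Nat.mul (2 ^ (4 * D)) 16 = 2 ^ (4 * (D + 1)) := by
      change 2 ^ (4 * D) * 16 = _
      rw [mul_add, pow_add]; norm_num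
    have e2 : Nat.add (pm (i, i + d)) (2 ^ (4 * D)) = mask pos' fc := hmfc.symm
    rw [e1, e2] at hp
    have e3 : mask pos' ∅ = 0 := by simp [mask]
    rw [List.map_cons, e3]
    exact hp
  obtain ⟨a1', a2', hcnt, hk⟩ := proc_spec (IsCyc G) Finset.card (mask pos') g _ _ _ h5 (∅ :: LF)
    (fun y hy => mask_xor hinj' hfcS (((hmem0 y).1 hy).1.trans hSS)) hmin
    (fun y _ hC => by rw [mask_mod]; exact Nat.mod_eq_of_lt (hsz _ hC)) LF a1 a2 hnd hI.cnt hp2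
  refine ⟨pos', _, a1', a2', ⟨hGS, hI.rim.trans hSS, hinj', ?_, ?_, hnd, ?_, hcnt⟩, hk⟩
  · intro e he
    rcases Finset.mem_insert.1 he with rfl | he
    · rw [hposc]; omega
    · rw [hposS e he]; have := hI.lt e he; omega
  · intro a ha
    rw [hposS _ (hI.rim ((mem_cyc hu).2 ⟨a, rfl⟩)), hI.posr a ha]
  · intro F
    rw [List.mem_append, List.mem_reverse, List.mem_map, hI.mem]
    constructor
    · rintro (⟨y, hy, rfl⟩ | ⟨h1, h2, h3⟩)
      · obtain ⟨h1, h2⟩ := (hmem0 y).1 hy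
        exact ⟨hgS y h1, ev_symmDiff hEfc h2, ⟨c, hgc y h1⟩⟩
      · exact ⟨h1.trans hSS, h2, h3⟩
    · rintro ⟨h1, h2, h3⟩
      by_cases hcF : c ∈ F
      · left
        refine ⟨g F, (hmem0 _).2 ⟨?_, ev_symmDiff hEfc h2⟩, hgg F⟩
        intro e he
        rw [hg, Finset.mem_symmDiff] at he
        have h4 : e ≠ c := by rintro rfl; tauto
        have h5 : e ∈ insert c S := by
          rcases he with he | he
          · exact hfcS he.1
          · exact h1 he.1
        exact (Finset.mem_insert.1 h5).resolve_left h4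
      · right
        refine ⟨?_, h2, h3⟩
        intro e he
        have h4 : e ≠ c := by rintro rfl; exact hcF he
        exact (Finset.mem_insert.1 (h1 he)).resolve_left h4

lemma search_spec {G : SimpleGraph V} [DecidablePred (IsCyc G)] {n : ℕ} {u : ℕ → V}
    (hu : Per n u)
    (h5 : ∀ T : List (Finset (Sym2 V)), T.Nodup →
      ∀ k, T.countP (fun F => decide (IsCyc G F ∧ F.card = k)) ≤ 2)
    (hsz : ∀ F, IsCyc G F → F.card < 15)
    (hG : ∀ k, 3 ≤ k → k ≤ n → {F : Finset (Sym2 V) | IsCyc G F ∧ F.card = k}.ncard = 2)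
    (full : ℕ) (hfull : ∀ k, full.testBit k = true → 3 ≤ k ∧ k ≤ n) (cs : List (ℕ × ℕ)) :
    ∀ S pos D LF a1 a2, Inv G n u S pos D LF a1 a2 → (∀ p ∈ cs, p.1 < p.2 ∧ p.2 < n) →
    cs.Nodup → (∀ p ∈ cs, s(u p.1, u p.2) ∉ S) →
    (∀ e ∈ G.edgeSet, e ∈ S ∨ ∃ p ∈ cs, e = s(u p.1, u p.2)) →
    search full (cs.map pm) (2 ^ (4 * D)) (LF.map (mask pos)) a1 a2 = true → False := by
  induction cs with
  | nil =>
    intro S pos D LF a1 a2 hI _ _ _ hE hs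
    have hs' : Bool.not (Nat.beq (a2 &&& full) full) = true := hs
    rw [Bool.not_eq_true', ← Bool.not_eq_true, Nat.beq_eq] at hs'
    apply hs'
    apply Nat.eq_of_testBit_eq
    intro k
    rw [Nat.testBit_and, Bool.and_eq_right_iff_imp]
    intro hk
    obtain ⟨h3, hn⟩ := hfull k hk
    rw [(hI.cnt k).2, ← hG k h3 hn]
    have hset : {F : Finset (Sym2 V) | IsCyc G F ∧ F.card = k} =
        ((LF.filter (fun F => decide (IsCyc G F ∧ F.card = k))).toFinset :
          Set (Finset (Sym2 V))) := by
      ext F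
      simp only [Set.mem_ofPred_eq, List.coe_toFinset, List.mem_filter, decide_eq_true_eq]
      constructor
      · intro h
        refine ⟨(hI.mem F).2 ⟨?_, h.1.ev, h.1.nonempty⟩, h⟩
        intro e he
        simpa using hE e (h.1.mem e he)
      · exact fun h => h.2
    rw [hset, Set.ncard_coe_finset, List.countP_eq_length_filter]
    exact List.toFinset_card_le _
  | cons p cs ih =>
    intro S pos D LF a1 a2 hI hlt hnd hS hE hs
    have hs' : @Bool.rec (fun _ => Bool) false
      (incl (pm p) (search full (cs.map pm)) (2 ^ (4 * D)) (LF.map (mask pos)) a1 a2)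
      (search full (cs.map pm) (2 ^ (4 * D)) (LF.map (mask pos)) a1 a2) = true := hs
    have hs1 : search full (cs.map pm) (2 ^ (4 * D)) (LF.map (mask pos)) a1 a2 = true := by
      by_contra hcon
      rw [Bool.not_eq_true] at hcon
      rw [hcon] at hs'
      exact Bool.false_ne_true hs'
    rw [hs1] at hs'
    obtain ⟨i, j⟩ := p
    obtain ⟨hij, hjn⟩ := hlt _ List.mem_cons_self
    have hlt' : ∀ p ∈ cs, p.1 < p.2 ∧ p.2 < n := fun p hp => hlt p (List.mem_cons_of_mem _ hp)
    have hS' : ∀ p ∈ cs, s(u p.1, u p.2) ∉ S := fun p hp => hS p (List.mem_cons_of_mem _ hp)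
    rw [List.nodup_cons] at hnd
    by_cases hadj : G.Adj (u i) (u j)
    · simp only at hij hjn
      obtain ⟨d, rfl⟩ : ∃ d, j = i + (d + 1) := ⟨j - i - 1, by omega⟩
      obtain ⟨pos', LF', a1', a2', hI', hk⟩ := incl_spec hu hI h5 hsz hjn
        (hS _ List.mem_cons_self) hadj _ hs'
      refine ih _ _ _ _ _ _ hI' hlt' hnd.2 ?_ ?_ hk
      · intro q hq
        rw [Finset.mem_insert, not_or]
        refine ⟨?_, hS' q hq⟩
        intro heq
        obtain ⟨q1, q2⟩ := hlt' q hq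
        rw [Sym2.eq_iff, hu.2, hu.2, hu.2, hu.2] at heq
        rcases heq with ⟨h1, h2⟩ | ⟨h1, h2⟩
        · have h1 := Nat.ModEq.eq_of_lt_of_lt h1 (by omega) (by omega)
          have h2 := Nat.ModEq.eq_of_lt_of_lt h2 (by omega) (by omega)
          apply hnd.1
          rw [← h2, ← h1]
          exact hq
        · have h1 := Nat.ModEq.eq_of_lt_of_lt h1 (by omega) (by omega)
          have h2 := Nat.ModEq.eq_of_lt_of_lt h2 (by omega) (by omega)
          omega
      · intro e he
        rcases hE e he with h | ⟨q, hq, rfl⟩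
        · exact Or.inl (Finset.mem_insert_of_mem h)
        · rcases List.mem_cons.1 hq with rfl | hq
          · left; exact Finset.mem_insert_self _ _
          · exact Or.inr ⟨q, hq, rfl⟩
    · refine ih _ _ _ _ _ _ hI hlt' hnd.2 hS' ?_ hs1
      intro e he
      rcases hE e he with h | ⟨q, hq, rfl⟩
      · exact Or.inl h
      · rcases List.mem_cons.1 hq with rfl | hq
        · exact absurd he hadj
        · exact Or.inr ⟨q, hq, rfl⟩

lemma inv_init {G : SimpleGraph V} [DecidablePred (IsCyc G)] {n : ℕ} {u : ℕ → V}
    (hu : Per n u) (ha : ∀ a, G.Adj (u a) (u (a + 1))) (hn : n ≤ 10) :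
    ∃ pos, Inv G n u (cyc n u) pos 10 [cyc n u] (2 ^ n) 0 ∧ mask pos (cyc n u) = pm (0, n) := by
  set pos := Function.invFunOn (edg u) (Finset.range n : Set ℕ) with hpos
  have hp : ∀ a < n, pos (edg u a) = a := by
    intro a ha
    exact (edg_injOn hu).leftInvOn_invFunOn (by simpa using ha)
  have hC : IsCyc G (cyc n u) := ⟨n, u, hu, ha, rfl⟩
  have hm : ∀ e ∈ cyc n u, ∃ a < n, edg u a = e := by
    intro e he
    simpa [cyc] using he
  refine ⟨pos, ⟨hC.mem, Finset.Subset.refl _, ?_, ?_, hp, by simp, ?_, ?_⟩, ?_⟩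
  · intro e he e' he' h
    obtain ⟨a, ha, rfl⟩ := hm e he
    obtain ⟨b, hb, rfl⟩ := hm e' he'
    rw [hp a ha, hp b hb] at h
    rw [h]
  · intro e he
    obtain ⟨a, ha, rfl⟩ := hm e he
    rw [hp a ha]; omega
  · intro F
    rw [List.mem_singleton]
    constructor
    · rintro rfl; exact ⟨Finset.Subset.refl _, hC.ev, hC.nonempty⟩
    · rintro ⟨h1, h2, h3⟩; exact ev_min hu h1 h2 h3
  · intro k
    rw [List.countP_cons, List.countP_nil, Nat.testBit_two_pow]
    simp only [hC, card_cyc hu, true_and, decide_eq_true_eq, Nat.zero_testBit]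
    by_cases h : n = k <;> simp [h]
  · have h := pm_eq 0 n
    rw [zero_add] at h
    rw [h]
    unfold mask cyc
    rw [Finset.sum_image (edg_injOn hu), Nat.Ico_zero_eq_range]
    apply Finset.sum_congr rfl
    intro a ha
    rw [hp a (by simpa using ha)]

lemma edge_cases {G : SimpleGraph V} {n : ℕ} {u : ℕ → V} (hu : Per n u)
    (hsurj : ∀ v, ∃ a, u a = v) {e : Sym2 V} (he : e ∈ G.edgeSet) :
    e ∈ cyc n u ∨ ∃ i d, 2 ≤ d ∧ d + 2 ≤ n ∧ i + d < n ∧ G.Adj (u i) (u (i + d)) ∧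
      e = s(u i, u (i + d)) := by
  have h3 := hu.1
  have hs : ∀ v, ∃ a < n, u a = v := by
    intro v
    obtain ⟨a, rfl⟩ := hsurj v
    exact ⟨a % n, Nat.mod_lt _ (by omega), (hu.2 _ _).2 (Nat.mod_modEq _ _)⟩
  have key : ∀ i j, i < j → j < n → G.Adj (u i) (u j) → s(u i, u j) ∈ cyc n u ∨
      ∃ i' d, 2 ≤ d ∧ d + 2 ≤ n ∧ i' + d < n ∧ G.Adj (u i') (u (i' + d)) ∧
      s(u i, u j) = s(u i', u (i' + d)) := by
    intro i j hij hj hadj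
    by_cases h1 : j = i + 1
    · left
      exact (mem_cyc hu).2 ⟨i, by rw [h1]; rfl⟩
    by_cases h2 : i = 0 ∧ j = n - 1
    · left
      refine (mem_cyc hu).2 ⟨j, ?_⟩
      have : u (j + 1) = u i := by
        rw [hu.2, h2.1, show j + 1 = n by omega, Nat.modEq_zero_iff_dvd]
      unfold edg
      rw [this, Sym2.eq_swap]
    · right
      have hj2 : i + (j - i) = j := by omega
      exact ⟨i, j - i, by omega, by omega, by omega, by rwa [hj2], by rw [hj2]⟩
  induction e using Sym2.ind with
  | _ x y =>
    obtain ⟨i, hi, rfl⟩ := hs x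
    obtain ⟨j, hj, rfl⟩ := hs y
    have hadj : G.Adj (u i) (u j) := he
    rcases lt_trichotomy i j with h | h | h
    · exact key i j h hj hadj
    · subst h; exact absurd rfl hadj.ne
    · rw [Sym2.eq_swap]
      exact key j i h hi hadj.symm

lemma chord_notMem {n : ℕ} {u : ℕ → V} (hu : Per n u) {i d : ℕ} (h2 : 2 ≤ d) (hd : d + 2 ≤ n)
    (hi : i + d < n) : s(u i, u (i + d)) ∉ cyc n u := by
  intro h
  obtain ⟨a, ha, h⟩ := Finset.mem_image.1 h
  rw [Finset.mem_range] at ha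
  unfold edg at h
  rw [Sym2.eq_iff, hu.2, hu.2, hu.2, hu.2] at h
  have hmod : ∀ x y : ℕ, x ≡ y [MOD n] → x < 2 * n → y < n → x = y ∨ x = y + n := by
    intro x y hxy hx hy
    by_cases hxn : x < n
    · exact Or.inl (Nat.ModEq.eq_of_lt_of_lt hxy hxn hy)
    · right
      have : x - n ≡ y [MOD n] := by
        have h1 : x - n + n ≡ y [MOD n] := by rwa [Nat.sub_add_cancel (by omega)]
        simpa [Nat.ModEq] using h1
      have := Nat.ModEq.eq_of_lt_of_lt this (by omega) hy
      omega
  rcases h with ⟨h3, h4⟩ | ⟨h3, h4⟩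
  · have := hmod _ _ h3 (by omega) (by omega)
    have := hmod _ _ h4 (by omega) (by omega)
    omega
  · have := hmod _ _ h3 (by omega) (by omega)
    have := hmod _ _ h4 (by omega) (by omega)
    omega

/-- Chords of circular length at least `d`, except `(0, d)`. -/
def chs (n d : ℕ) : List (ℕ × ℕ) :=
  ((List.range n).product (List.range n)).filter (fun p =>
    decide (p.1 + d ≤ p.2 ∧ p.2 + d ≤ p.1 + n ∧ ¬ (p.1 = 0 ∧ p.2 = d)))

lemma nodup_chs (n d : ℕ) : (chs n d).Nodup :=
  (List.nodup_range.product List.nodup_range).filter _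

lemma mem_chs {n d : ℕ} {p : ℕ × ℕ} : p ∈ chs n d ↔ (p.1 < n ∧ p.2 < n) ∧
    (p.1 + d ≤ p.2 ∧ p.2 + d ≤ p.1 + n ∧ ¬ (p.1 = 0 ∧ p.2 = d)) := by
  obtain ⟨a, b⟩ := p
  simp [chs]
  intros
  tauto

/-- All the finite checks for `n`. -/
structure Good (n : ℕ) : Prop where
  le : n ≤ 10
  full : ∀ k, Nat.testBit (2 ^ (n + 1) - 8) k = true → 3 ≤ k ∧ k ≤ n
  leaf : 2 ^ (n + 1) - 8 ≠ 0
  chk : ∀ d, 2 ≤ d → 2 * d ≤ n →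
    incl (pm (0, d)) (search (2 ^ (n + 1) - 8) ((chs n d).map pm)) (2 ^ 40) [pm (0, n)] (2 ^ n) 0
      = true

lemma no_graph {n : ℕ} (hg : Good n) (G : SimpleGraph V) [DecidablePred (IsCyc G)]
    (hV : Fintype.card V = n) {u : ℕ → V} (hu : Per n u) (ha : ∀ a, G.Adj (u a) (u (a + 1)))
    (hsurj : ∀ v, ∃ a, u a = v)
    (hG : ∀ k, 3 ≤ k → k ≤ n → {F : Finset (Sym2 V) | IsCyc G F ∧ F.card = k}.ncard = 2) :
    False := by
  have hle := hg.le
  have hn3 := hu.1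
  have hsz : ∀ F, IsCyc G F → F.card < 15 := by
    intro F hF
    have := hF.card_le
    omega
  have h5 : ∀ T : List (Finset (Sym2 V)), T.Nodup →
      ∀ k, T.countP (fun F => decide (IsCyc G F ∧ F.card = k)) ≤ 2 := by
    intro T hT k
    by_cases hk : 3 ≤ k ∧ k ≤ n
    · rw [← hG k hk.1 hk.2, List.countP_eq_length_filter,
        ← List.toFinset_card_of_nodup (hT.filter _), ← Set.ncard_coe_finset]
      apply Set.ncard_le_ncard
      · intro F hF
        simpa using (by simpa using hF : _ ∧ _).2
      · exact Set.toFinite _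
    · rw [List.countP_eq_zero.2]
      · omega
      · intro F _ hF
        rw [decide_eq_true_eq] at hF
        have h1 := hF.1.card_le
        have h2 := hF.1.card_ge
        omega
  by_cases hex : ∃ d, 2 ≤ d ∧ d + 2 ≤ n ∧ ∃ a, G.Adj (u a) (u (a + d))
  · classical
    obtain ⟨hd2, hdn, a, hadj⟩ := Nat.find_spec hex
    have hmin : ∀ d', 2 ≤ d' → d' + 2 ≤ n → ∀ a, G.Adj (u a) (u (a + d')) → Nat.find hex ≤ d' :=
      fun d' h1 h2 a h3 => Nat.find_min' hex ⟨h1, h2, a, h3⟩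
    set d := Nat.find hex
    have hmin2 : ∀ d', 2 ≤ d' → d' + 2 ≤ n → ∀ a, G.Adj (u a) (u (a + d')) → d + d' ≤ n := by
      intro d' h1 h2 a h3
      have := hmin (n - d') (by omega) (by omega) (a + d') (by
        have : u (a + d' + (n - d')) = u a := by
          rw [hu.2, show a + d' + (n - d') = a + n by omega]
          simp [Nat.ModEq]
        rw [this]; exact h3.symm)
      omega
    have h2d : 2 * d ≤ n := by
      have := hmin2 d hd2 hdn a hadj
      omega
    set w : ℕ → V := fun b => u (a + b) with hw
    have hwP : Per n w := by
      refine ⟨hn3, fun b c => ?_⟩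
      rw [hw, hu.2]
      exact ⟨fun h => Nat.ModEq.add_left_cancel' a h, fun h => h.add_left a⟩
    have hwa : ∀ b, G.Adj (w b) (w (b + 1)) := fun b => ha (a + b)
    have hws : ∀ v, ∃ b, w b = v := by
      intro v
      obtain ⟨b, rfl⟩ := hsurj v
      refine ⟨b + (n - 1) * a, ?_⟩
      rw [hw, hu.2]
      obtain ⟨m, rfl⟩ : ∃ m, n = m + 1 := ⟨n - 1, by omega⟩
      rw [show a + (b + (m + 1 - 1) * a) = b + (m + 1) * a by
        rw [Nat.add_sub_cancel]; ring]
      simp [Nat.ModEq]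
    have hwd : G.Adj (w 0) (w (0 + d)) := by simpa [hw] using hadj
    obtain ⟨pos, hI, hmask⟩ := inv_init hwP hwa hle
    have hchk := hg.chk d hd2 h2d
    have hc0 : s(w 0, w (0 + d)) ∉ cyc n w := chord_notMem hwP hd2 hdn (by omega)
    have hnn : 0 + d < n := by omega
    obtain ⟨pos', LF', a1', a2', hI', hk⟩ := incl_spec hwP hI h5 hsz hnn hc0 hwd
      (search (2 ^ (n + 1) - 8) ((chs n d).map pm)) (by
        rw [List.map_singleton, hmask, zero_add]; exact hchk)
    refine search_spec hwP h5 hsz hG _ hg.full (chs n d) _ _ _ _ _ _ hI' ?_ (nodup_chs n d) ?_ ?_ hk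
    · intro p hp
      obtain ⟨h1, h2⟩ := mem_chs.1 hp
      omega
    · rintro ⟨i, j⟩ hp
      obtain ⟨h1, h2, h3, h4⟩ := mem_chs.1 hp
      simp only at h1 h2 h3 h4
      have hj : i + (j - i) = j := by omega
      rw [Finset.mem_insert, not_or]
      constructor
      · rw [Sym2.eq_iff, hwP.2, hwP.2, hwP.2, hwP.2]
        rintro (⟨h5, h6⟩ | ⟨h5, h6⟩)
        · have h5 := Nat.ModEq.eq_of_lt_of_lt h5 (by omega) (by omega)
          have h6 := Nat.ModEq.eq_of_lt_of_lt h6 (by omega) (by omega)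
          simp only at h5 h6
          omega
        · have h5 := Nat.ModEq.eq_of_lt_of_lt h5 (by omega) (by omega)
          have h6 := Nat.ModEq.eq_of_lt_of_lt h6 (by omega) (by omega)
          simp only at h5 h6
          omega
      · have := chord_notMem hwP (i := i) (d := j - i) (by omega) (by omega) (by omega)
        rw [hj] at this
        exact this
    · intro e he
      rcases edge_cases hwP hws he with h | ⟨i, d', h1, h2, h3, h4, rfl⟩
      · exact Or.inl (Finset.mem_insert_of_mem h)
      · rw [hw] at h4
        simp only [← add_assoc] at h4
        have m1 := hmin d' h1 h2 (a + i) h4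
        have m2 := hmin2 d' h1 h2 (a + i) h4
        by_cases h0 : i = 0 ∧ d' = d
        · left
          rw [h0.1, h0.2]
          exact Finset.mem_insert_self _ _
        · right
          refine ⟨(i, i + d'), mem_chs.2 ?_, rfl⟩
          simp only
          omega
  · obtain ⟨pos, hI, hmask⟩ := inv_init hu ha hle
    refine search_spec hu h5 hsz hG _ hg.full [] _ _ _ _ _ _ hI (by simp) (by simp) (by simp) ?_ ?_
    · intro e he
      rcases edge_cases hu hsurj he with h | ⟨i, d', h1, h2, h3, h4, rfl⟩
      · exact Or.inl h
      · exact absurd ⟨d', h1, h2, i, h4⟩ hex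
    · have hl := hg.leaf
      change Bool.not (Nat.beq (0 &&& (2 ^ (n + 1) - 8)) (2 ^ (n + 1) - 8)) = true
      rw [Bool.not_eq_true', ← Bool.not_eq_true, Nat.beq_eq, Nat.zero_and]
      exact fun h => hl h.symm

lemma no_pan {n : ℕ} (hg : Good n) (h3 : 3 ≤ n) (G : SimpleGraph V) (hV : Fintype.card V = n)
    (hG : ∀ k, 3 ≤ k → k ≤ n → cycleCount G k = 2) : False := by
  classical
  have hG' : ∀ k, 3 ≤ k → k ≤ n →
      {F : Finset (Sym2 V) | IsCyc G F ∧ F.card = k}.ncard = 2 := by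
    intro k h1 h2
    rw [← cycleCount_eq G h1]; exact hG k h1 h2
  obtain ⟨F, ⟨k, u, hu, ha, hF⟩, hc⟩ : {F : Finset (Sym2 V) | IsCyc G F ∧ F.card = n}.Nonempty := by
    apply Set.nonempty_of_ncard_ne_zero
    rw [hG' n h3 le_rfl]; norm_num
  rw [hF, card_cyc hu] at hc
  subst hc
  refine no_graph hg G hV hu ha ?_ hG'
  have hinj : Function.Injective (fun i : Fin k => u i) := by
    intro i j hij
    have := (hu.2 _ _).1 hij
    exact Fin.ext (Nat.ModEq.eq_of_lt_of_lt this i.2 j.2)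
  have hbij := (Fintype.bijective_iff_injective_and_card (fun i : Fin k => u i)).2
    ⟨hinj, by simp [hV]⟩
  intro v
  obtain ⟨i, hi⟩ := hbij.2 v
  exact ⟨i, hi⟩

end Main

lemma full_spec (n : ℕ) (k : ℕ) (h : Nat.testBit (2 ^ (n + 1) - 8) k = true) : 3 ≤ k ∧ k ≤ n := by
  constructor
  · by_contra hk
    rcases Nat.lt_or_ge n 2 with hn | hn
    · have : 2 ^ (n + 1) - 8 = 0 := by
        interval_cases n <;> rfl
      rw [this] at h
      simp at h
    · obtain ⟨m, rfl⟩ := Nat.exists_eq_add_of_le hn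
      have e : 2 ^ (2 + m + 1) - 8 = 2 ^ 3 * (2 ^ m - 1) := by
        rw [Nat.mul_sub, ← pow_add, show 2 + m + 1 = 3 + m by omega]
        rfl
      rw [e, Nat.testBit_two_pow_mul] at h
      simp at h
      omega
  · by_contra hk
    have h1 : 2 ^ (n + 1) - 8 < 2 ^ k :=
      lt_of_lt_of_le (Nat.sub_lt (by positivity) (by norm_num))
        (Nat.pow_le_pow_right (by norm_num) (by omega))
    rw [Nat.testBit_lt_two_pow h1] at h
    exact Bool.false_ne_true h

/-- The finite check for a single shortest chord. -/
def chk (n d : ℕ) : Bool :=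
  incl (pm (0, d)) (search (2 ^ (n + 1) - 8) ((chs n d).map pm)) (2 ^ 40) [pm (0, n)] (2 ^ n) 0

set_option maxRecDepth 100000

lemma good3 : Good 3 := ⟨by norm_num, full_spec 3, by norm_num, by intros; omega⟩
lemma good4 : Good 4 := by
  refine ⟨by norm_num, full_spec 4, by norm_num, fun d h1 h2 => ?_⟩
  change chk 4 d = true
  obtain rfl : d = 2 := by omega
  decide +kernel
lemma good5 : Good 5 := by
  refine ⟨by norm_num, full_spec 5, by norm_num, fun d h1 h2 => ?_⟩
  change chk 5 d = true
  obtain rfl : d = 2 := by omega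
  decide +kernel
lemma good6 : Good 6 := by
  refine ⟨by norm_num, full_spec 6, by norm_num, fun d h1 h2 => ?_⟩
  change chk 6 d = true
  obtain rfl | rfl : d = 2 ∨ d = 3 := by omega
  all_goals decide +kernel
lemma good7 : Good 7 := by
  refine ⟨by norm_num, full_spec 7, by norm_num, fun d h1 h2 => ?_⟩
  change chk 7 d = true
  obtain rfl | rfl : d = 2 ∨ d = 3 := by omega
  all_goals decide +kernel
lemma good9 : Good 9 := by
  refine ⟨by norm_num, full_spec 9, by norm_num, fun d h1 h2 => ?_⟩
  change chk 9 d = true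
  obtain rfl | rfl | rfl : d = 2 ∨ d = 3 ∨ d = 4 := by omega
  all_goals decide +kernel
lemma good10 : Good 10 := by
  refine ⟨by norm_num, full_spec 10, by norm_num, fun d h1 h2 => ?_⟩
  change chk 10 d = true
  obtain rfl | rfl | rfl | rfl : d = 2 ∨ d = 3 ∨ d = 4 ∨ d = 5 := by omega
  all_goals decide +kernel

end TwoPan

theorem no_two_pancyclic_small_orders {V : Type*} [Fintype V] (G : SimpleGraph V)
    (hv : Fintype.card V = 9 ∨ Fintype.card V = 10 ∨ Fintype.card V < 8) :
    ¬ IsRPancyclic G 2 := by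
  classical
  rintro ⟨h3, h⟩
  have key : TwoPan.Good (Fintype.card V) := by
    rcases hv with hv | hv | hv
    · rw [hv]; exact TwoPan.good9
    · rw [hv]; exact TwoPan.good10
    · generalize Fintype.card V = n at h3 hv
      interval_cases n
      · exact TwoPan.good3
      · exact TwoPan.good4
      · exact TwoPan.good5
      · exact TwoPan.good6
      · exact TwoPan.good7
  exact TwoPan.no_pan key h3 G rfl h
end
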